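/- arXiv:1801.03536 — 2 statements merged into one kernel-verified Lean document; each statement's English description precedes it below -/
import Mathlib

section
/- The following are equivalent: (1) the substitution σ is not unilaterally recognizable; (2) for each L ∈ ℕ there exist i, j ∈ ℤ₊ such that σ(u_j) is a strict (proper) suffix of σ(u_i), and σ(u_{i+k}) = σ(u_{j+k}) for every integer k with 1 ≤ k ≤ L. -/
open List Filter

section Defs

variable {A : Type*}

/-- The segment `u_[i,j)` of the sequence `u`. -/
def seg (u : ℕ → A) (i j : ℕ) : List A :=
  (List.range (j - i)).map fun k => u (i + k)

/-- A substitution applied to a word, letter by letter. -/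
def substWord (σ : A → List A) (w : List A) : List A := w.flatMap σ

/-- `σ^p` applied to a word. -/
def substPow (σ : A → List A) (p : ℕ) (w : List A) : List A := (substWord σ)^[p] w

/-- A substitution is primitive if some power of it sends every letter to a word
containing every letter. -/
def IsPrimitiveSubst (σ : A → List A) : Prop :=
  ∃ k : ℕ, ∀ a b : A, a ∈ substPow σ k [b]

/-- `u` is a fixed point of `σ`: the image of every prefix of `u` is again a prefix of `u`. -/
def IsFixedPoint (σ : A → List A) (u : ℕ → A) : Prop :=
  ∀ m : ℕ, substWord σ (seg u 0 m) = seg u 0 (substWord σ (seg u 0 m)).length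

/-- `u` is aperiodic under the left shift: `T^i u ≠ u` for all `i ≥ 1`. -/
def AperiodicSeq (u : ℕ → A) : Prop := ∀ i : ℕ, 1 ≤ i → (fun n => u (n + i)) ≠ u

/-- The set `E_p` of natural `p`-cutting points. -/
def cutPoints (σ : A → List A) (u : ℕ → A) (p : ℕ) : Set ℕ :=
  { m | ∃ n : ℕ, m = (substPow σ p (seg u 0 n)).length }

/-- Unilateral recognizability of `σ` (with fixed point `u`). -/
def UnilaterallyRecognizable (σ : A → List A) (u : ℕ → A) : Prop :=
  ∃ L : ℕ, 1 ≤ L ∧ ∀ i j : ℕ,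
    seg u i (i + L) = seg u j (j + L) → i ∈ cutPoints σ u 1 → j ∈ cutPoints σ u 1

/-- `L_n(u)`: the set of factors of `u` of length `n`. -/
def factors (u : ℕ → A) (n : ℕ) : Set (List A) := { w | ∃ i : ℕ, w = seg u i (i + n) }

/-- `L(u)`: the language of `u` (including the empty word). -/
def lang (u : ℕ → A) : Set (List A) := { w | ∃ i n : ℕ, w = seg u i (i + n) }

/-- `w^n`: the concatenation of `n` copies of `w`. -/
def wpow (w : List A) (n : ℕ) : List A := (List.replicate n w).flatten

/-- A nonempty word `v` is primitive if `v = w^n` with `w` nonempty forces `w = v`. -/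
def PrimitiveWord (v : List A) : Prop :=
  ∀ w : List A, w ≠ [] → ∀ n : ℕ, 1 ≤ n → v = wpow w n → w = v

/-- `g` is a gap of occurrences of `w` in `u` if every interval of length `g` in `ℤ₊`
contains an occurrence of `w`. -/
def IsGap (u : ℕ → A) (w : List A) (g : ℕ) : Prop := ∀ i : ℕ, w <:+: seg u i (i + g)

/-- The minimal gap of a word. -/
noncomputable def minGap (u : ℕ → A) (w : List A) : ℕ := sInf { g | IsGap u w g }

/-- `g`: the maximum over `w ∈ L₂(u)` of the minimal gap of `w`. -/
noncomputable def gapConst (u : ℕ → A) : ℕ :=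
  sSup { m | ∃ w ∈ factors u 2, m = minGap u w }

/-- A natural `p`-cutting `{α, σ^p(u_{i'}), …, σ^p(u_{i'+k-1}), β}` of `u_[i,i+ℓ)`. -/
def IsNaturalCutting (σ : A → List A) (u : ℕ → A) (p i ℓ : ℕ)
    (α : List A) (i' k : ℕ) (β : List A) : Prop :=
  1 ≤ k ∧
  α <:+ substPow σ p [u (i' - 1)] ∧
  β <+: substPow σ p [u (i' + k)] ∧
  seg u i (i + ℓ) = α ++ substPow σ p (seg u i' (i' + k)) ++ β ∧
  i + α.length = (substPow σ p (seg u 0 i')).length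

section Fin

variable [Fintype A] [Nonempty A] [DecidableEq A]

/-- The incidence matrix of a substitution: the `(a,b)` entry is `|σ(a)|_b`. -/
def incMatrix (σ : A → List A) : Matrix A A ℕ := Matrix.of fun a b => (σ a).count b

/-- The incidence matrix as a real matrix. -/
noncomputable def incMatrixR (σ : A → List A) : Matrix A A ℝ :=
  Matrix.of fun a b => ((σ a).count b : ℝ)

/-- `S_p = max_{a ∈ A} |σ^p(a)|`. -/
def Sp (σ : A → List A) (p : ℕ) : ℕ :=
  Finset.univ.sup' Finset.univ_nonempty fun a => (substPow σ p [a]).length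

/-- `I_p = min_{a ∈ A} |σ^p(a)|`. -/
def Ip (σ : A → List A) (p : ℕ) : ℕ :=
  Finset.univ.inf' Finset.univ_nonempty fun a => (substPow σ p [a]).length

/-- `C = ⌈(max_b β_b)/(min_b β_b)⌉` for a positive eigenvector `β`. -/
noncomputable def Cst (β : A → ℝ) : ℕ :=
  ⌈(Finset.univ.sup' Finset.univ_nonempty β) / (Finset.univ.inf' Finset.univ_nonempty β)⌉₊

/-- `K = ⌈λ C² max{2(g+1), (#A)²}⌉`. -/
noncomputable def Kst (u : ℕ → A) (lam : ℝ) (β : A → ℝ) : ℕ :=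
  ⌈lam * (Cst β : ℝ) ^ 2 *
    max (2 * ((gapConst u : ℝ) + 1)) ((Fintype.card A : ℝ) ^ 2)⌉₊

/-- The constant `p₀` of Lemma 4.2. -/
noncomputable def p0 (u : ℕ → A) (lam : ℝ) (β : A → ℝ) : ℕ :=
  (Kst u lam β) ^ 2 * ((Cst β) ^ 4 * (Kst u lam β + 1) + 2 * (Cst β) ^ 2 + 1) *
    (∑ n ∈ Finset.Icc ((Cst β) ^ 2 * (Kst u lam β + 1) + 2)
        ((Kst u lam β + 1) * (Cst β) ^ 6 + 2 * (Cst β) ^ 4 + (Cst β) ^ 2 + 2), n) + 1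

/-- The constant `L₀ = (C⁴(K+1)+2C²+1) S_{p₀}`. -/
noncomputable def L0 (σ : A → List A) (u : ℕ → A) (lam : ℝ) (β : A → ℝ) : ℕ :=
  ((Cst β) ^ 4 * (Kst u lam β + 1) + 2 * (Cst β) ^ 2 + 1) * Sp σ (p0 u lam β)

/-- The ℓ¹ norm of a vector. -/
def l1norm (f : A → ℝ) : ℝ := ∑ a, |f a|

/-- The projective metric on positive row vectors. -/
noncomputable def projMetric (x y : A → ℝ) : ℝ :=
  Real.log ((Finset.univ.sup' Finset.univ_nonempty fun a => x a / y a) /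
    (Finset.univ.inf' Finset.univ_nonempty fun a => x a / y a))

/-- The Birkhoff contraction coefficient of a matrix. -/
noncomputable def birkhoff (M : Matrix A A ℝ) : ℝ :=
  sSup { r | ∃ x y : A → ℝ, (∀ a, 0 < x a) ∧ (∀ a, 0 < y a) ∧
    LinearIndependent ℝ ![x, y] ∧
    r = projMetric (Matrix.vecMul x M) (Matrix.vecMul y M) / projMetric x y }

end Fin

/-- Membership in the vertex set `V^*`: pairs `(xac, ybc)` of factors of `u` of length
`N + L₁ + 1` with `a ≠ b` and `|c| = L₁`. -/
def memVstar (u : ℕ → A) (N L₁ : ℕ) (p : List A × List A) : Prop :=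
  ∃ (x y c : List A) (a b : A), a ≠ b ∧
    x.length = N ∧ y.length = N ∧ c.length = L₁ ∧
    p.1 = x ++ a :: c ∧ p.2 = y ++ b :: c ∧
    p.1 ∈ factors u (N + L₁ + 1) ∧ p.2 ∈ factors u (N + L₁ + 1)

/-- An edge between representatives: there is a word `w` with `s'w` a suffix of `σ(s)` and
`t'w` a suffix of `σ(t)`. -/
def edgeRep (σ : A → List A) (p q : List A × List A) : Prop :=
  ∃ w : List A, w ≠ [] ∧ (q.1 ++ w) <:+ substWord σ p.1 ∧ (q.2 ++ w) <:+ substWord σ p.2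

/-- An edge in the graph `G` between the unordered pairs represented by `p` and `q`. -/
def graphEdge (σ : A → List A) (p q : List A × List A) : Prop :=
  edgeRep σ p q ∨ edgeRep σ p q.swap ∨ edgeRep σ p.swap q ∨ edgeRep σ p.swap q.swap

/-- A representative generates a gap of natural 1-cutting points. -/
def genGapRep (σ : A → List A) (p : List A × List A) : Prop :=
  ∃ (α β : A) (γ δ : List A),
    (σ α <:+ σ β ∧ σ α ≠ σ β) ∧
    List.Forall₂ (fun s t => σ s = σ t) γ δ ∧
    (α :: γ) <:+ substWord σ p.1 ∧ (β :: δ) <:+ substWord σ p.2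

/-- The unordered pair represented by `p` generates a gap of natural 1-cutting points. -/
def genGap (σ : A → List A) (p : List A × List A) : Prop :=
  genGapRep σ p ∨ genGapRep σ p.swap

/-- The list of consecutive two-letter blocks of a word. -/
def pairsList (l : List A) : List (List A) :=
  List.zipWith (fun a b => [a, b]) l l.tail

end Defs

/-!
Suppose a two-sided sequence is parsed in two different ways into words of `σ`. Either the overlaps
of the two parsings make `σ` factor through a smaller alphabet, `σ = τ ∘ α`, or they force the
sequence to be periodic far out. Aperiodicity excludes the second case, and in the first one
`α ∘ τ` fixes the image of `u` on a smaller alphabet, so by induction parsings are unique on the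
two-sided hull of `u`. By compactness a window around a position then decides whether it is a
cutting point. Consequently two occurrences of a long word are cut alike except near their left
ends, and at the last position where exactly one of them is cut, one image is a strict suffix of
the other while all following images agree.
-/

universe v

section Words

variable {A B C G H : Type*} [AddMonoidWithOne G] [AddMonoidWithOne H]

/-- The word `w` occurs at position `p` in the sequence `y`, one-sided for `G = ℕ` and
two-sided for `G = ℤ`. -/
def OccursAt (w : List B) (y : G → B) (p : G) : Prop :=
  ∀ (k : ℕ) (h : k < w.length), y (p + k) = w[k]

/-- The sequence `y` is the concatenation of the words `σ (x n)`, the `n`-th one occupying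
the interval `[c n, c (n + 1))`. Outside these intervals `y` is unconstrained. -/
structure IsParsing (σ : A → List B) (x : G → A) (c : G → G) (y : G → B) : Prop where
  cut_succ : ∀ n, c (n + 1) = c n + (σ (x n)).length
  occursAt : ∀ n, OccursAt (σ (x n)) y (c n)

/-- Every position lies in one of the intervals `[c n, c n + |σ (x n)|)`. -/
def Covers (σ : A → List B) (x : G → A) (c : G → G) : Prop :=
  ∀ p, ∃ (n : G) (t : ℕ), t < (σ (x n)).length ∧ p = c n + t

/-- The language of `x` is contained in the language of `u`. -/
def FactorsSubset (x : G → A) (u : H → A) : Prop :=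
  ∀ l p, OccursAt l x p → ∃ i, OccursAt l u i

theorem occursAt_nil (y : G → B) (p : G) : OccursAt [] y p := by
  simp [OccursAt]

theorem occursAt_append {l l' : List B} {y : G → B} {p : G} :
    OccursAt (l ++ l') y p ↔ OccursAt l y p ∧ OccursAt l' y (p + l.length) := by
  refine ⟨fun h => ⟨fun k hk => ?_, fun k hk => ?_⟩, fun ⟨h, h'⟩ k hk => ?_⟩
  · rw [h k (by grind), List.getElem_append_left hk]
  · rw [add_assoc, ← Nat.cast_add, h (l.length + k) (by grind)]
    simp
  · by_cases hkl : k < l.length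
    · rw [h k hkl, List.getElem_append_left hkl]
    · rw [List.getElem_append_right (by omega), ← h' (k - l.length) (by grind), add_assoc,
        ← Nat.cast_add, Nat.add_sub_cancel' (by omega)]

theorem occursAt_cons {a : B} {l : List B} {y : G → B} {p : G} :
    OccursAt (a :: l) y p ↔ y p = a ∧ OccursAt l y (p + 1) := by
  rw [← List.singleton_append, occursAt_append]
  simp [OccursAt]

theorem occursAt_map_range (y : G → B) (p : G) (n : ℕ) :
    OccursAt ((List.range n).map fun k : ℕ => y (p + k)) y p := by
  simp [OccursAt]

theorem OccursAt.eq {l l' : List B} {y : G → B} {p : G} (h : OccursAt l y p)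
    (h' : OccursAt l' y p) (hlen : l.length = l'.length) : l = l' :=
  List.ext_getElem hlen fun k hk hk' => by rw [← h k hk, ← h' k hk']

theorem OccursAt.transfer {w l : List B} {y : G → B} {v : H → B} {p : G} {q : H} {t : ℕ}
    (hy : OccursAt w y p) (hv : OccursAt w v q) (hl : OccursAt l y (p + t))
    (ht : t + l.length ≤ w.length) : OccursAt l v (q + t) := by
  intro k hk
  rw [add_assoc, ← Nat.cast_add, hv _ (by omega), ← hl k hk, add_assoc, ← Nat.cast_add,
    hy _ (by omega)]

theorem mul_length_le_length_flatMap {ρ : A → List B} {m : ℕ} (hρ : ∀ a, m ≤ (ρ a).length)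
    (l : List A) : m * l.length ≤ (l.flatMap ρ).length := by
  induction l with
  | nil => simp
  | cons a l ih =>
    have := hρ a
    rw [List.flatMap_cons, length_append, length_cons, mul_add]
    omega

theorem length_le_length_flatMap {σ : A → List B} (hσ : ∀ a, σ a ≠ []) (l : List A) :
    l.length ≤ (l.flatMap σ).length := by
  simpa using mul_length_le_length_flatMap (m := 1) (fun a => length_pos_of_ne_nil (hσ a)) l

theorem flatMap_ne_nil {σ : A → List B} (hσ : ∀ a, σ a ≠ []) {l : List A} (hl : l ≠ []) :
    l.flatMap σ ≠ [] := by
  have := length_le_length_flatMap hσ l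
  have := length_pos_of_ne_nil hl
  exact ne_nil_of_length_pos (by omega)

theorem IsParsing.flatMap {σ : A → List B} {x : G → A} {c : G → G} {y : G → B}
    (h : IsParsing σ x c y) {l : List A} {n : G} (hl : OccursAt l x n) :
    c (n + l.length) = c n + (l.flatMap σ).length ∧ OccursAt (l.flatMap σ) y (c n) := by
  induction l generalizing n with
  | nil => simp [occursAt_nil]
  | cons a l ih =>
    obtain ⟨rfl, htail⟩ := occursAt_cons.1 hl
    have hlen : ((length (x n :: l) : ℕ) : G) = 1 + l.length := by
      rw [length_cons, Nat.add_comm, Nat.cast_add, Nat.cast_one]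
    rw [List.flatMap_cons, occursAt_append, hlen, ← add_assoc, (ih htail).1, ← h.cut_succ,
      length_append, Nat.cast_add, ← add_assoc, ← h.cut_succ]
    exact ⟨rfl, h.occursAt n, (ih htail).2⟩

theorem IsParsing.comp {τ : C → List A} {σ : A → List B} {z : G → C} {c e : G → G} {x : G → A}
    {y : G → B} (hτ : IsParsing τ z c x) (hσ : IsParsing σ x e y) :
    IsParsing (fun b => (τ b).flatMap σ) z (e ∘ c) y where
  cut_succ n := by simp [hτ.cut_succ, (hσ.flatMap (hτ.occursAt n)).1]
  occursAt n := (hσ.flatMap (hτ.occursAt n)).2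

theorem IsParsing.eq_of_covers {σ : A → List B} {x : G → A} {c : G → G} {y y' : G → B}
    (h : IsParsing σ x c y) (h' : IsParsing σ x c y') (hcov : Covers σ x c) : y = y' := by
  funext p
  obtain ⟨n, t, ht, rfl⟩ := hcov p
  rw [h.occursAt n t ht, h'.occursAt n t ht]

theorem FactorsSubset.of_isParsing {σ : A → List B} (hσ : ∀ a, σ a ≠ []) {x : G → A} {c : G → G}
    {y : G → B} (h : IsParsing σ x c y) (hcov : Covers σ x c) {u : H → A} {e : H → H}
    {v : H → B} (hu : IsParsing σ u e v) (hx : FactorsSubset x u) : FactorsSubset y v := by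
  intro l p hl
  obtain ⟨n, t, ht, rfl⟩ := hcov p
  set w := (List.range l.length).map fun k : ℕ => x (n + 1 + k) with hw
  have hwx : OccursAt (x n :: w) x n := occursAt_cons.2 ⟨rfl, occursAt_map_range x _ _⟩
  obtain ⟨i, hi⟩ := hx _ n hwx
  refine ⟨_, (h.flatMap hwx).2.transfer (hu.flatMap hi).2 hl ?_⟩
  have hwlen : w.length = l.length := by simp [hw]
  have := length_le_length_flatMap hσ w
  rw [List.flatMap_cons, length_append]
  omega

end Words

section Images

variable {A B C : Type*}

theorem exists_cut_le_lt_nat {c : ℕ → ℕ} (hc : StrictMono c) {p : ℕ} (h0 : c 0 ≤ p) :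
    ∃ n, c n ≤ p ∧ p < c (n + 1) := by
  refine ⟨_, Nat.findGreatest_spec (P := fun n => c n ≤ p) (Nat.zero_le p) h0, ?_⟩
  by_contra! h
  exact Nat.findGreatest_is_greatest (Nat.lt_succ_self _) (hc.le_apply.trans h) h

theorem exists_cut_le_lt_int {c : ℤ → ℤ} (hc : StrictMono c) (p : ℤ) :
    ∃ n, c n ≤ p ∧ p < c (n + 1) := by
  have hmono : Monotone fun n => c n - n :=
    monotone_int_of_le_succ fun n => by have := hc (lt_add_one n); omega
  have hbelow : c (min 0 (p - c 0)) ≤ p := by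
    have := hmono (min_le_left 0 (p - c 0))
    simp only at this
    omega
  have hbdd : ∀ n, c n ≤ p → n ≤ max 0 (p - c 0) := fun n hn => by
    by_contra! hlt
    have := hmono ((le_max_left 0 (p - c 0)).trans hlt.le)
    simp only at this
    omega
  obtain ⟨n, hn, hmax⟩ := Int.exists_greatest_of_bdd ⟨_, hbdd⟩ ⟨_, hbelow⟩
  exact ⟨n, hn, by by_contra! h; have := hmax _ h; omega⟩

theorem eq_of_mem_cut_intervals {c : ℤ → ℤ} (hc : StrictMono c) {n m p : ℤ}
    (hn : c n ≤ p ∧ p < c (n + 1)) (hm : c m ≤ p ∧ p < c (m + 1)) : n = m :=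
  le_antisymm (Int.lt_add_one_iff.1 (hc.lt_iff_lt.1 (hn.1.trans_lt hm.2)))
    (Int.lt_add_one_iff.1 (hc.lt_iff_lt.1 (hm.1.trans_lt hn.2)))

theorem IsParsing.strictMono_nat {σ : A → List B} {x : ℕ → A} {c : ℕ → ℕ} {y : ℕ → B}
    (h : IsParsing σ x c y) (hσ : ∀ n, σ (x n) ≠ []) : StrictMono c :=
  strictMono_nat_of_lt_succ fun n => by
    simpa [h.cut_succ n] using length_pos_of_ne_nil (hσ n)

theorem IsParsing.covers_nat {σ : A → List B} {x : ℕ → A} {c : ℕ → ℕ} {y : ℕ → B}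
    (h : IsParsing σ x c y) (hσ : ∀ n, σ (x n) ≠ []) (h0 : c 0 = 0) : Covers σ x c := by
  intro p
  obtain ⟨n, hle, hlt⟩ := exists_cut_le_lt_nat (h.strictMono_nat hσ) (h0.trans_le p.zero_le)
  have := h.cut_succ n
  simp only [Nat.cast_id] at this
  exact ⟨n, p - c n, by omega, by simp only [Nat.cast_id]; omega⟩

theorem strictMono_of_cut_succ {σ : A → List B} (hσ : ∀ a, σ a ≠ []) {x : ℤ → A} {c : ℤ → ℤ}
    (h : ∀ n, c (n + 1) = c n + (σ (x n)).length) : StrictMono c :=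
  strictMono_int_of_lt_succ fun n => by
    have := length_pos_of_ne_nil (hσ (x n))
    have := h n
    omega

theorem covers_of_cut_succ {σ : A → List B} (hσ : ∀ a, σ a ≠ []) {x : ℤ → A} {c : ℤ → ℤ}
    (h : ∀ n, c (n + 1) = c n + (σ (x n)).length) : Covers σ x c := by
  intro p
  obtain ⟨n, hle, hlt⟩ := exists_cut_le_lt_int (strictMono_of_cut_succ hσ h) p
  have := h n
  exact ⟨n, (p - c n).toNat, by omega, by omega⟩

theorem exists_isParsing_of_cut_succ {σ : A → List B} (hσ : ∀ a, σ a ≠ []) {x : ℤ → A}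
    {c : ℤ → ℤ} (h : ∀ n, c (n + 1) = c n + (σ (x n)).length) : ∃ y, IsParsing σ x c y := by
  have hletter (p : ℤ) :
      ∃ b, ∀ n (k : ℕ) (hk : k < (σ (x n)).length), p = c n + k → b = (σ (x n))[k] := by
    obtain ⟨n, t, ht, rfl⟩ := covers_of_cut_succ hσ h p
    refine ⟨(σ (x n))[t], fun m k hk hp => ?_⟩
    have hn := h n
    have hm := h m
    obtain rfl : n = m := eq_of_mem_cut_intervals (strictMono_of_cut_succ hσ h)
      (p := c n + t) (by omega) (by omega)
    obtain rfl : t = k := by omega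
    rfl
  choose y hy using hletter
  exact ⟨y, h, fun n k hk => hy _ n k hk rfl⟩

theorem exists_partial_sums (len : ℤ → ℤ) (s : ℤ) :
    ∃ c : ℤ → ℤ, c 0 = s ∧ ∀ n, c (n + 1) = c n + len n := by
  refine ⟨fun n => Int.inductionOn' n 0 s (fun k _ ck => ck + len k)
    fun k _ ck => ck - len (k - 1), Int.inductionOn'_self .., fun n => ?_⟩
  rcases le_or_gt 0 n with hn | hn
  · exact Int.inductionOn'_add_one hn
  · have := Int.inductionOn'_sub_one (motive := fun _ => ℤ) (zero := s)
      (succ := fun k _ ck => ck + len k) (pred := fun k _ ck => ck - len (k - 1))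
      (Int.add_one_le_iff.2 hn)
    simp only [add_sub_cancel_right] at this
    simp only [this, sub_add_cancel]

theorem exists_isParsing_int {σ : A → List B} (hσ : ∀ a, σ a ≠ []) (x : ℤ → A) (s : ℤ) :
    ∃ c y, c 0 = s ∧ IsParsing σ x c y := by
  obtain ⟨c, h0, hc⟩ := exists_partial_sums (fun n => (σ (x n)).length) s
  obtain ⟨y, hy⟩ := exists_isParsing_of_cut_succ hσ hc
  exact ⟨c, y, h0, hy⟩

theorem IsParsing.shift {σ : A → List B} {x : ℤ → A} {c : ℤ → ℤ} {y : ℤ → B}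
    (h : IsParsing σ x c y) (d s : ℤ) :
    IsParsing σ (fun n => x (n + d)) (fun n => c (n + d) - s) (fun p => y (p + s)) where
  cut_succ n := by rw [add_right_comm, h.cut_succ]; ring
  occursAt n k hk := by
    rw [← h.occursAt (n + d) k hk, sub_add_eq_add_sub]
    simp only [sub_add_cancel]

theorem IsParsing.restrict_nat {σ : A → List B} (hσ : ∀ a, σ a ≠ []) {x : ℤ → A} {c : ℤ → ℤ}
    {y : ℤ → B} (h : IsParsing σ x c y) (h0 : 0 ≤ c 0) :
    IsParsing σ (fun n : ℕ => x n) (fun n : ℕ => (c n).toNat) fun p : ℕ => y p := by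
  have hnonneg (n : ℕ) : 0 ≤ c n :=
    h0.trans ((strictMono_of_cut_succ hσ h.cut_succ).monotone n.cast_nonneg)
  refine ⟨fun n => ?_, fun n k hk => ?_⟩
  · have := h.cut_succ n
    have := hnonneg n
    simp only [Nat.cast_add, Nat.cast_one, Nat.cast_id]
    omega
  · rw [← h.occursAt n k hk]
    simp [hnonneg n]

theorem exists_isParsing_nat {σ : A → List B} (hσ : ∀ a, σ a ≠ []) (x : ℕ → A) :
    ∃ c y, c 0 = 0 ∧ IsParsing σ x c y := by
  obtain ⟨c, y, h0, h⟩ := exists_isParsing_int hσ (fun n => x n.toNat) 0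
  exact ⟨_, _, by simp [h0], h.restrict_nat hσ h0.ge⟩

theorem IsParsing.cuts_eq {σ : A → List B} {x : ℤ → A} {c c' : ℤ → ℤ} {y y' : ℤ → B}
    (h : IsParsing σ x c y) (h' : IsParsing σ x c' y') {m : ℤ} (hm : c m = c' m) : c = c' := by
  funext n
  induction n using Int.inductionOn' (b := m) with
  | zero => exact hm
  | succ k _ ih => rw [h.cut_succ, h'.cut_succ, ih]
  | pred k _ ih =>
    have hk := h.cut_succ (k - 1)
    have hk' := h'.cut_succ (k - 1)
    rw [sub_add_cancel] at hk hk'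
    omega

theorem IsParsing.exists_factorization {α : A → List B} {τ : B → List C} (hα : ∀ a, α a ≠ [])
    (hτ : ∀ b, τ b ≠ []) {x : ℤ → A} {c : ℤ → ℤ} {y : ℤ → C}
    (h : IsParsing (fun a => (α a).flatMap τ) x c y) :
    ∃ e z f, IsParsing α x e z ∧ IsParsing τ z f y ∧ f ∘ e = c := by
  obtain ⟨e, z, he, hz⟩ := exists_isParsing_int hα x 0
  obtain ⟨f, y', hf, hy'⟩ := exists_isParsing_int hτ z (c 0)
  obtain rfl := (hz.comp hy').cuts_eq h (m := 0) (by simp [he, hf])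
  have hcov := covers_of_cut_succ (fun a => flatMap_ne_nil hτ (hα a)) h.cut_succ
  obtain rfl := (hz.comp hy').eq_of_covers h hcov
  exact ⟨e, z, f, hz, hy', rfl⟩

theorem IsParsing.exists_factorization_nat {α : A → List B} {τ : B → List C}
    (hα : ∀ a, α a ≠ []) (hτ : ∀ b, τ b ≠ []) {x : ℕ → A} {c : ℕ → ℕ} {y : ℕ → C}
    (h : IsParsing (fun a => (α a).flatMap τ) x c y) (h0 : c 0 = 0) :
    ∃ e z f, IsParsing α x e z ∧ IsParsing τ z f y ∧ e 0 = 0 ∧ f 0 = 0 := by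
  obtain ⟨e, z, he, hz⟩ := exists_isParsing_nat hα x
  obtain ⟨f, y', hf, hy'⟩ := exists_isParsing_nat hτ z
  have hcuts : f ∘ e = c := by
    funext n
    induction n with
    | zero => rw [Function.comp_apply, he, hf, h0]
    | succ n ih => rw [(hz.comp hy').cut_succ, h.cut_succ, ih]
  have hcov := h.covers_nat (fun n => flatMap_ne_nil hτ (hα _)) h0
  obtain rfl := (hcuts ▸ hz.comp hy').eq_of_covers h hcov
  exact ⟨e, z, f, hz, hy', he, hf⟩

/-- The one-sided sequence `y` is periodic from some rank on. -/
def EventuallyPeriodic (y : ℕ → B) : Prop :=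
  ∃ p, 0 < p ∧ ∀ᶠ n in atTop, y (n + p) = y n

theorem IsParsing.eventuallyPeriodic {σ : A → List B} {x : ℕ → A} (hσ : ∀ n, σ (x n) ≠ [])
    {c : ℕ → ℕ} {y : ℕ → B} (h : IsParsing σ x c y) (hx : EventuallyPeriodic x) :
    EventuallyPeriodic y := by
  obtain ⟨p, hp, hper⟩ := hx
  obtain ⟨N, hN⟩ := eventually_atTop.1 hper
  have hc := h.strictMono_nat hσ
  have hq : c N < c (N + p) := hc (by omega)
  have hcut (n : ℕ) (hn : N ≤ n) : c (n + p) = c n + (c (N + p) - c N) := by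
    induction n, hn using Nat.le_induction with
    | base => omega
    | succ n hn ih => rw [Nat.add_right_comm, h.cut_succ, h.cut_succ, hN n hn, ih,
        Nat.add_right_comm]
  refine ⟨c (N + p) - c N, by omega, eventually_atTop.2 ⟨c N, fun m hm => ?_⟩⟩
  obtain ⟨n, hle, hlt⟩ := exists_cut_le_lt_nat hc ((hc.monotone N.zero_le).trans hm)
  have hNn : N ≤ n := Nat.lt_add_one_iff.1 (hc.lt_iff_lt.1 (hm.trans_lt hlt))
  have hk : m - c n < (σ (x n)).length := by
    have := h.cut_succ n
    simp only [Nat.cast_id] at this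
    omega
  have hy := h.occursAt n _ hk
  have hy' := h.occursAt (n + p) (m - c n) (by rwa [hN n hNn])
  simp only [hN n hNn, hcut n hNn, Nat.cast_id] at hy hy'
  rw [← hy] at hy'
  convert hy' using 2 <;> omega

end Images

section Segments

variable {A : Type*}

theorem length_seg (u : ℕ → A) (i j : ℕ) : (seg u i j).length = j - i := by
  simp [seg]

theorem occursAt_seg (u : ℕ → A) (i j : ℕ) : OccursAt (seg u i j) u i := by
  simp [OccursAt, seg]

theorem OccursAt.eq_seg {u : ℕ → A} {l : List A} {i : ℕ} (h : OccursAt l u i) :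
    l = seg u i (i + l.length) :=
  h.eq (occursAt_seg u i _) (by simp [length_seg])

end Segments

section Blocks

variable {A B : Type*}

open Classical in
/-- Cut a word into blocks, each consisting of a first letter `x` followed by a possibly empty run
of the letter `b`; the block is stored as the pair of `x` and the run. -/
noncomputable def blocks (b : B) : List B → List (B × List B)
  | [] => []
  | x :: l => (x, l.takeWhile (· = b)) :: blocks b (l.dropWhile (· = b))
termination_by l => l.length
decreasing_by exact Nat.lt_succ_of_le (l.dropWhile_sublist _).length_le

theorem flatMap_blocks (b : B) (l : List B) : (blocks b l).flatMap (fun c => c.1 :: c.2) = l := by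
  induction l using blocks.induct b with
  | case1 => simp [blocks]
  | case2 x l ih => rw [blocks, flatMap_cons, ih, cons_append, takeWhile_append_dropWhile]

open Classical in
theorem head?_dropWhile_ne (b : B) (l : List B) : (l.dropWhile (· = b)).head? ≠ some b := by
  intro h
  have := List.head?_dropWhile_not (fun x => decide (x = b)) l
  simp [h] at this

open Classical in
theorem length_blocks {b : B} {l : List B} (hl : l.head? ≠ some b) :
    (blocks b l).length = l.countP (· ≠ b) := by
  induction l using blocks.induct b with
  | case1 => simp [blocks]
  | case2 x l ih =>
    have hx : x ≠ b := fun h => hl (by simp [h])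
    have hrun : (l.takeWhile (· = b)).countP (· ≠ b) = 0 :=
      countP_eq_zero.2 fun c hc => by simpa using mem_takeWhile_imp hc
    rw [blocks, length_cons, ih (head?_dropWhile_ne b l), countP_cons_of_pos (by simpa using hx)]
    conv_rhs => rw [← l.takeWhile_append_dropWhile (p := fun c => decide (c = b))]
    rw [countP_append, hrun, Nat.zero_add]

theorem length_blocks_le {b : B} {l : List B} (hl : l.head? ≠ some b) :
    (blocks b l).length ≤ l.length :=
  length_blocks hl ▸ countP_le_length

theorem length_blocks_lt {b : B} {l : List B} (hl : l.head? ≠ some b) (hb : b ∈ l) :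
    (blocks b l).length < l.length := by
  classical
  rw [length_blocks hl, countP_lt_length_iff]
  exact ⟨b, hb, by simp⟩

/-- The sequence of blocks `(x, run of b)` of `z`, the positions of the first letters being those
`n` with `z n ≠ b`. -/
noncomputable def blockSeq (b : B) (z : ℕ → B) (t : ℕ) : B × List B :=
  (z (Nat.nth (z · ≠ b) t), seg z (Nat.nth (z · ≠ b) t + 1) (Nat.nth (z · ≠ b) (t + 1)))

theorem isParsing_blockSeq {b : B} {z : ℕ → B} (hz : {n | z n ≠ b}.Infinite) :
    IsParsing (fun c : B × List B => c.1 :: c.2) (blockSeq b z) (Nat.nth (z · ≠ b)) z where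
  cut_succ t := by
    have := Nat.nth_strictMono hz (Nat.lt_add_one t)
    simp only [blockSeq, length_cons, length_seg, Nat.cast_id]
    omega
  occursAt t := occursAt_cons.2 ⟨rfl, occursAt_seg z _ _⟩

open Classical in
theorem OccursAt.count_ne_add_length {b : B} {z : ℕ → B} {l : List B} {p : ℕ}
    (h : OccursAt l z p) :
    Nat.count (z · ≠ b) (p + l.length) = Nat.count (z · ≠ b) p + l.countP (· ≠ b) := by
  induction l generalizing p with
  | nil => simp
  | cons x l ih =>
    obtain ⟨rfl, hl⟩ := occursAt_cons.1 h
    rw [length_cons, Nat.add_comm l.length, ← Nat.add_assoc, ih hl, Nat.count_succ, countP_cons]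
    simp only [decide_eq_true_eq]
    omega

theorem OccursAt.ne_of_head?_ne {b : B} {z : ℕ → B} {l : List B} {p : ℕ} (h : OccursAt l z p)
    (hl : l.head? ≠ some b) (hnext : z (p + l.length) ≠ b) : z p ≠ b := by
  cases l with
  | nil => exact hnext
  | cons x l => exact (occursAt_cons.1 h).1.trans_ne fun hx => hl (by simp [hx])

open Classical in
theorem occursAt_blocks {b : B} {z : ℕ → B} {l : List B} {p : ℕ} (h : OccursAt l z p)
    (hl : l.head? ≠ some b) (hnext : z (p + l.length) ≠ b) :
    OccursAt (blocks b l) (blockSeq b z) (Nat.count (z · ≠ b) p) := by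
  induction l using blocks.induct b generalizing p with
  | case1 => simp [blocks, occursAt_nil]
  | case2 x l ih =>
    set run := l.takeWhile (· = b)
    set rest := l.dropWhile (· = b)
    have hsplit : x :: l = (x :: run) ++ rest := by simp [run, rest]
    rw [hsplit] at h hnext
    obtain ⟨hblock, hrest⟩ := occursAt_append.1 h
    rw [length_append, ← Nat.add_assoc] at hnext
    obtain ⟨rfl, hrun⟩ := occursAt_cons.1 hblock
    have hx : z p ≠ b := fun h => hl (by simp [h])
    have hend : z (p + (z p :: run).length) ≠ b :=
      hrest.ne_of_head?_ne (head?_dropWhile_ne b l) hnext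
    have hcount : Nat.count (z · ≠ b) (p + (z p :: run).length) = Nat.count (z · ≠ b) p + 1 := by
      rw [hblock.count_ne_add_length, countP_cons_of_pos (by simpa using hx),
        countP_eq_zero.2 fun c hc => by simpa using mem_takeWhile_imp hc]
    have hnth : Nat.nth (z · ≠ b) (Nat.count (z · ≠ b) p) = p := Nat.nth_count hx
    have hnth_succ : Nat.nth (z · ≠ b) (Nat.count (z · ≠ b) p + 1) = p + 1 + run.length :=
      hcount ▸ (Nat.nth_count hend).trans (by rw [length_cons]; omega)
    rw [blocks, occursAt_cons]
    refine ⟨?_, hcount ▸ ih hrest (head?_dropWhile_ne b l) hnext⟩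
    simp only [blockSeq, hnth, hnth_succ]
    exact congrArg (z p, ·) hrun.eq_seg.symm

theorem IsParsing.apply_cut_ne {b : B} {σ : A → List B} (hne : ∀ a, σ a ≠ [])
    (hb : ∀ a, (σ a).head? ≠ some b) {w : ℕ → A} {c : ℕ → ℕ} {z : ℕ → B}
    (h : IsParsing σ w c z) (n : ℕ) : z (c n) ≠ b := by
  have hocc := h.occursAt n
  have hhead := hb (w n)
  cases hσ : σ (w n) with
  | nil => exact absurd hσ (hne _)
  | cons x l =>
    rw [hσ] at hocc hhead
    exact (occursAt_cons.1 hocc).1.trans_ne fun hx => hhead (by simp [hx])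

open Classical in
theorem IsParsing.blocks {b : B} {σ : A → List B} (hne : ∀ a, σ a ≠ [])
    (hb : ∀ a, (σ a).head? ≠ some b) {w : ℕ → A} {c : ℕ → ℕ} {z : ℕ → B}
    (h : IsParsing σ w c z) :
    IsParsing (fun a => blocks b (σ a)) w (Nat.count (z · ≠ b) ∘ c) (blockSeq b z) where
  cut_succ n := by
    simp only [Function.comp_apply, h.cut_succ, length_blocks (hb _)]
    exact (h.occursAt n).count_ne_add_length
  occursAt n := occursAt_blocks (h.occursAt n) (hb _)
    (by simpa [h.cut_succ n] using h.apply_cut_ne hne hb (n + 1))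

end Blocks

section CommonRefinement

variable {A B : Type v}

/-- Two parsings `(w, c)` and `(w', c')` of `y` by `σ` refined by a single parsing `(z, f)` by `τ`:
the words of `σ` factor as `τ ∘ α`, and both parsings of `y` come from parsings of `z` by `α`. -/
structure CommonRefinement (σ : A → List B) (w w' : ℕ → A) (c c' : ℕ → ℕ) (y : ℕ → B) where
  /-- The intermediate alphabet. -/
  C : Type v
  /-- The outer factor of `σ`. -/
  α : A → List C
  /-- The inner factor of `σ`. -/
  τ : C → List B
  /-- The common intermediate sequence. -/
  z : ℕ → C
  /-- The common refinement of the cuts of `y`. -/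
  f : ℕ → ℕ
  /-- The cuts of `z` given by `w`. -/
  e : ℕ → ℕ
  /-- The cuts of `z` given by `w'`. -/
  e' : ℕ → ℕ
  ne_nil : ∀ b, τ b ≠ []
  flatMap_eq : ∀ a, (α a).flatMap τ = σ a
  isParsing : IsParsing α w e z
  isParsing' : IsParsing α w' e' z
  isParsing_base : IsParsing τ z f y
  cuts_eq : f ∘ e = c
  cuts_eq' : f ∘ e' = c'

variable {σ : A → List B} {w w' : ℕ → A} {c c' : ℕ → ℕ} {y : ℕ → B}

namespace CommonRefinement

/-- The trivial refinement, in which the base is the sequence `y` itself. -/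
def refl (h : IsParsing σ w c y) (h' : IsParsing σ w' c' y) : CommonRefinement σ w w' c c' y where
  C := B
  α := σ
  τ b := [b]
  z := y
  e := c
  e' := c'
  f := id
  ne_nil := by simp
  flatMap_eq := by simp
  isParsing := h
  isParsing' := h'
  isParsing_base := ⟨fun _ => rfl, fun _ => by simp [OccursAt]⟩
  cuts_eq := rfl
  cuts_eq' := rfl

/-- Refine the intermediate sequence of a refinement. -/
def trans (R : CommonRefinement σ w w' c c' y)
    (S : CommonRefinement R.α w w' R.e R.e' R.z) : CommonRefinement σ w w' c c' y where
  C := S.C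
  α := S.α
  τ b := (S.τ b).flatMap R.τ
  z := S.z
  e := S.e
  e' := S.e'
  f := R.f ∘ S.f
  ne_nil b := flatMap_ne_nil R.ne_nil (S.ne_nil b)
  flatMap_eq a := by rw [← R.flatMap_eq, ← S.flatMap_eq, List.flatMap_assoc]
  isParsing := S.isParsing
  isParsing' := S.isParsing'
  isParsing_base := S.isParsing_base.comp R.isParsing_base
  cuts_eq := by rw [Function.comp_assoc, S.cuts_eq, R.cuts_eq]
  cuts_eq' := by rw [Function.comp_assoc, S.cuts_eq', R.cuts_eq']

open Classical in
/-- When no word of `σ` begins with `b`, the blocks of `y` form a common refinement. -/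
noncomputable def ofBlocks (hσ : ∀ a, σ a ≠ []) {b : B} (hb : ∀ a, (σ a).head? ≠ some b)
    (h : IsParsing σ w c y) (h' : IsParsing σ w' c' y) : CommonRefinement σ w w' c c' y where
  C := B × List B
  α a := blocks b (σ a)
  τ t := t.1 :: t.2
  z := blockSeq b y
  e := Nat.count (y · ≠ b) ∘ c
  e' := Nat.count (y · ≠ b) ∘ c'
  f := Nat.nth (y · ≠ b)
  ne_nil := by simp
  flatMap_eq a := flatMap_blocks b (σ a)
  isParsing := h.blocks hσ hb
  isParsing' := h'.blocks hσ hb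
  isParsing_base := isParsing_blockSeq <|
    Set.infinite_of_injective_forall_mem (h.strictMono_nat fun n => hσ _).injective
      (h.apply_cut_ne hσ hb)
  cuts_eq := funext fun n => Nat.nth_count (h.apply_cut_ne hσ hb n)
  cuts_eq' := funext fun n => Nat.nth_count (h'.apply_cut_ne hσ hb n)

theorem α_ne_nil (R : CommonRefinement σ w w' c c' y) (hσ : ∀ a, σ a ≠ []) (a : A) :
    R.α a ≠ [] := fun h => hσ a (by simp [← R.flatMap_eq, h])

end CommonRefinement

theorem exists_commonRefinement_forall_head [Finite A] (hσ : ∀ a, σ a ≠ [])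
    (h : IsParsing σ w c y) (h' : IsParsing σ w' c' y) :
    ∃ R : CommonRefinement σ w w' c c' y,
      ∀ a, ∀ b ∈ R.α a, ∃ a', (R.α a').head? = some b := by
  have := Fintype.ofFinite A
  induction hN : ∑ a, (σ a).length using Nat.strong_induction_on generalizing B c c' y with
  | _ N ih =>
    by_cases hhead : ∀ a, ∀ b ∈ σ a, ∃ a', (σ a').head? = some b
    · exact ⟨.refl h h', hhead⟩
    push Not at hhead
    obtain ⟨a₀, b, hba, hb⟩ := hhead
    let R := CommonRefinement.ofBlocks hσ hb h h'
    have hlt : ∑ a, (R.α a).length < N := hN ▸ Finset.sum_lt_sum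
      (fun a _ => length_blocks_le (hb a)) ⟨a₀, Finset.mem_univ _, length_blocks_lt (hb a₀) hba⟩
    obtain ⟨S, hS⟩ := ih _ hlt (R.α_ne_nil hσ) R.isParsing R.isParsing' rfl
    exact ⟨R.trans S, hS⟩

/-- The words of `σ` factor through words over a strictly smaller alphabet; such a `σ` is called
simplifiable by Ehrenfeucht and Rozenberg. -/
def Simplifiable (σ : A → List B) : Prop :=
  ∃ (C : Type v) (_ : Finite C) (α : A → List C) (τ : C → List B), Nat.card C < Nat.card A ∧
    (∀ a, α a ≠ []) ∧ (∀ b, τ b ≠ []) ∧ ∀ a, (α a).flatMap τ = σ a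

theorem Simplifiable.reverse (h : Simplifiable σ) : Simplifiable fun a => (σ a).reverse := by
  obtain ⟨C, hC, α, τ, hlt, hα, hτ, hατ⟩ := h
  refine ⟨C, hC, fun a => (α a).reverse, fun b => (τ b).reverse, hlt, by simpa, by simpa,
    fun a => ?_⟩
  simp [← hατ, reverse_flatMap, Function.comp_def]

theorem CommonRefinement.simplifiable [Finite A] (R : CommonRefinement σ w w' c c' y)
    (hσ : ∀ a, σ a ≠ []) (hhead : ∀ a, ∀ b ∈ R.α a, ∃ a', (R.α a').head? = some b)
    (hinj : ¬ Function.Injective fun a => (R.α a).head?) : Simplifiable σ := by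
  have hα := R.α_ne_nil hσ
  let H : A → {b // ∃ a', (R.α a').head? = some b} := fun a =>
    ⟨(R.α a).head (hα a), a, head?_eq_some_head _⟩
  have hsurj : Function.Surjective H := fun ⟨b, a, ha⟩ =>
    ⟨a, Subtype.ext (by simpa [head?_eq_some_head (hα a)] using ha)⟩
  refine ⟨_, .of_surjective H hsurj, fun a => (R.α a).attachWith _ (hhead a), fun b => R.τ b,
    ?_, by simpa using hα, fun b => R.ne_nil b, fun a => ?_⟩
  · classical
    have := Fintype.ofFinite A
    have := Fintype.ofSurjective H hsurj
    simp only [Nat.card_eq_fintype_card]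
    refine Fintype.card_lt_of_surjective_not_injective H hsurj fun hH => hinj fun a a' haa' => hH ?_
    simpa [H, head?_eq_some_head (hα _)] using haa'
  · rw [← R.flatMap_eq]
    conv_rhs => rw [← attachWith_map_subtype_val (hhead a)]
    exact (flatMap_map _ _ _).symm

end CommonRefinement

section Overlaps

theorem eventuallyPeriodic_of_succ_eq {X : Type*} {V : ℕ → X} {f : X → X}
    (hV : ∀ n, V (n + 1) = f (V n)) (hfin : (Set.range V).Finite) : EventuallyPeriodic V := by
  have hninj : ¬ Function.Injective V := fun h => Set.infinite_range_of_injective h hfin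
  obtain ⟨m, n, heq, hne⟩ := Function.not_injective_iff.1 hninj
  wlog hlt : m < n generalizing m n
  · exact this n m heq.symm hne.symm (by omega)
  refine ⟨n - m, by omega, eventually_atTop.2 ⟨m, fun k hk => ?_⟩⟩
  induction k, hk using Nat.le_induction with
  | base => rw [Nat.add_sub_cancel' hlt.le, heq]
  | succ k hk ih => rw [Nat.add_right_comm, hV, hV, ih]

variable {A : Type v} {B : Type*} {α : A → List B} {w w' : ℕ → A} {e e' : ℕ → ℕ} {z : ℕ → B}

/-- A nonempty word occurring in `z` from a position in `E` up to a position in `E'`. -/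
structure IsOverlap (z : ℕ → B) (E E' : Set ℕ) (p : ℕ) (v : List B) : Prop where
  occursAt : OccursAt v z p
  ne_nil : v ≠ []
  mem_left : p ∈ E
  mem_right : p + v.length ∈ E'

variable [Nonempty A]

/-- The letter `a` for which `α a` has the same first letter as `v`, when the words of `α` have
distinct first letters. -/
noncomputable def decodeHead (α : A → List B) (v : List B) : A :=
  Function.invFun (fun a => (α a).head?) v.head?

/-- The overlap following `v`: what remains of the longer of `v` and the word of `α` with the same
first letter after removing the shorter one. -/
noncomputable def nextOverlap (α : A → List B) (v : List B) : List B :=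
  v.drop (α (decodeHead α v)).length ++ (α (decodeHead α v)).drop v.length

/-- The part of the overlap `v` not covered by the next one. -/
noncomputable def overlapStep (α : A → List B) (v : List B) : List B :=
  v.take (α (decodeHead α v)).length

theorem OccursAt.overlapStep {v : List B} {p : ℕ} (h : OccursAt v z p) :
    OccursAt (overlapStep α v) z p := by
  rw [← v.take_append_drop (α (decodeHead α v)).length] at h
  exact (occursAt_append.1 h).1

theorem OccursAt.decodeHead_eq (hα : ∀ a, α a ≠ [])
    (hinj : Function.Injective fun a => (α a).head?) {a : A} {v : List B} {p : ℕ}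
    (h : OccursAt (α a) z p) (hv : OccursAt v z p) (hne : v ≠ []) : decodeHead α v = a := by
  have hhead {l : List B} (hl : l ≠ []) (h : OccursAt l z p) : l.head? = some (z p) := by
    cases l with
    | nil => exact absurd rfl hl
    | cons b l => exact congrArg some (occursAt_cons.1 h).1.symm
  rw [decodeHead, hhead hne hv, ← hhead (hα a) h]
  exact Function.leftInverse_invFun hinj a

theorem IsOverlap.next (hα : ∀ a, α a ≠ []) (hinj : Function.Injective fun a => (α a).head?)
    (h : IsParsing α w e z) {E' : Set ℕ} (hd : Disjoint (Set.range e) E') {p : ℕ} {v : List B}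
    (hv : IsOverlap z (Set.range e) E' p v) :
    IsOverlap z (Set.range e) E' (p + (overlapStep α v).length) (nextOverlap α v) ∨
      IsOverlap z E' (Set.range e) (p + (overlapStep α v).length) (nextOverlap α v) := by
  obtain ⟨hocc, hne, ⟨i, rfl⟩, hend⟩ := hv
  have hi := h.occursAt i
  have hcut : e (i + 1) = e i + (α (w i)).length := h.cut_succ i
  have hdrop {l : List B} {n : ℕ} (hn : n ≤ l.length) (hl : OccursAt l z (e i)) :
      OccursAt (l.drop n) z (e i + n) := by
    rw [← l.take_append_drop n, occursAt_append, length_take, min_eq_left hn] at hl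
    exact hl.2
  rw [overlapStep, nextOverlap, hi.decodeHead_eq hα hinj hocc hne, length_take]
  rcases lt_trichotomy (α (w i)).length v.length with hlt | heq | hlt
  · rw [min_eq_left hlt.le, drop_of_length_le hlt.le, append_nil, ← hcut]
    refine .inl ⟨hcut ▸ hdrop hlt.le hocc, by simpa using hlt, ⟨_, rfl⟩, ?_⟩
    rwa [hcut, length_drop, Nat.add_assoc, Nat.add_sub_cancel' hlt.le]
  · exact absurd (by rwa [← heq, ← hcut] at hend) (hd.notMem_of_mem_left ⟨i + 1, rfl⟩)
  · rw [min_eq_right hlt.le, drop_of_length_le hlt.le, nil_append]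
    refine .inr ⟨hdrop hlt.le hi, by simpa using hlt, hend, i + 1, ?_⟩
    rw [hcut, length_drop]
    omega

theorem finite_range_of_nextOverlap [Finite A] {V : ℕ → List B}
    (hV : ∀ n, V (n + 1) = nextOverlap α (V n)) : (Set.range V).Finite := by
  have hsuffixes (l : List B) : {v | v <:+ l}.Finite :=
    (finite_toSet l.tails).subset fun v hv => (mem_tails v l).2 hv
  refine ((hsuffixes (V 0)).union (Set.finite_iUnion fun a => hsuffixes (α a))).subset ?_
  rintro _ ⟨n, rfl⟩
  simp only [Set.mem_union, Set.mem_ofPred_eq, Set.mem_iUnion]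
  induction n with
  | zero => exact .inl (suffix_refl _)
  | succ n ih =>
    rw [hV, nextOverlap]
    rcases le_total (V n).length (α (decodeHead α (V n))).length with hle | hle
    · rw [drop_of_length_le hle, nil_append]
      exact .inr ⟨_, drop_suffix _ _⟩
    · rw [drop_of_length_le hle, append_nil]
      exact ih.imp (drop_suffix _ _).trans fun ⟨a, ha⟩ => ⟨a, (drop_suffix _ _).trans ha⟩

/- Under disjointness of the two sets of cuts, an overlap determines the next one, and the overlaps
range over the finitely many suffixes of the words of `α` and of the first overlap. -/
theorem eventuallyPeriodic_of_disjoint_cuts [Finite A] (hα : ∀ a, α a ≠ [])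
    (hinj : Function.Injective fun a => (α a).head?) (h : IsParsing α w e z)
    (h' : IsParsing α w' e' z) (hd : Disjoint (Set.range e) (Set.range e')) :
    EventuallyPeriodic z := by
  have hne : e 0 ≠ e' 0 := hd.ne_of_mem ⟨0, rfl⟩ ⟨0, rfl⟩
  wlog hlt : e 0 < e' 0 generalizing w w' e e'
  · exact this h' h hd.symm hne.symm (by omega)
  let next : ℕ × List B → ℕ × List B := fun s =>
    (s.1 + (overlapStep α s.2).length, nextOverlap α s.2)
  let S : ℕ → ℕ × List B := fun n => next^[n] (e 0, seg z (e 0) (e' 0))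
  have hS (n : ℕ) : S (n + 1) = next (S n) := Function.iterate_succ_apply' next n _
  have hoverlap (n : ℕ) : IsOverlap z (Set.range e) (Set.range e') (S n).1 (S n).2 ∨
      IsOverlap z (Set.range e') (Set.range e) (S n).1 (S n).2 := by
    induction n with
    | zero =>
      refine .inl ⟨occursAt_seg _ _ _, ne_nil_of_length_pos ?_, ⟨0, rfl⟩, 0, ?_⟩ <;>
        simp only [S, Function.iterate_zero, id, length_seg] <;> omega
    | succ n ih =>
      rw [hS]
      exact ih.elim (fun hv => hv.next hα hinj h hd)
        fun hv => (hv.next hα hinj h' hd.symm).symm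
  have hstep_ne (n : ℕ) : overlapStep α (S n).2 ≠ [] := by
    simpa [overlapStep, hα] using (hoverlap n).elim (·.ne_nil) (·.ne_nil)
  have hparse : IsParsing (overlapStep α) (fun n => (S n).2) (fun n => (S n).1) z := by
    refine ⟨fun n => by simp only [hS, next, Nat.cast_id], fun n => ?_⟩
    exact (hoverlap n).elim (·.occursAt.overlapStep) (·.occursAt.overlapStep)
  refine hparse.eventuallyPeriodic hstep_ne ?_
  have hnext (n : ℕ) : (S (n + 1)).2 = nextOverlap α (S n).2 := by rw [hS]
  exact eventuallyPeriodic_of_succ_eq hnext (finite_range_of_nextOverlap hnext)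

end Overlaps

section OneSided

variable {A B : Type v} [Finite A] {σ : A → List B} {w w' : ℕ → A} {c c' : ℕ → ℕ} {y : ℕ → B}

theorem simplifiable_of_cut_eq_of_ne (hσ : ∀ a, σ a ≠ []) (h : IsParsing σ w c y)
    (h' : IsParsing σ w' c' y) (h0 : c 0 = c' 0) (hw : w 0 ≠ w' 0) : Simplifiable σ := by
  have : Nonempty A := ⟨w 0⟩
  obtain ⟨R, hR⟩ := exists_commonRefinement_forall_head hσ h h'
  refine R.simplifiable hσ hR fun hinj => hw ?_
  have hf := R.isParsing_base.strictMono_nat fun n => R.ne_nil _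
  have he : R.e 0 = R.e' 0 := hf.injective <|
    (congrFun R.cuts_eq 0).trans (h0.trans (congrFun R.cuts_eq' 0).symm)
  have hα := R.α_ne_nil hσ
  have hocc' := R.isParsing'.occursAt 0
  rw [← he] at hocc'
  rw [← hocc'.decodeHead_eq hα hinj hocc' (hα _),
    (R.isParsing.occursAt 0).decodeHead_eq hα hinj hocc' (hα _)]

theorem simplifiable_or_eventuallyPeriodic_of_disjoint_cuts (hσ : ∀ a, σ a ≠ [])
    (h : IsParsing σ w c y) (h' : IsParsing σ w' c' y)
    (hd : Disjoint (Set.range c) (Set.range c')) : Simplifiable σ ∨ EventuallyPeriodic y := by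
  have : Nonempty A := ⟨w 0⟩
  obtain ⟨R, hR⟩ := exists_commonRefinement_forall_head hσ h h'
  refine or_iff_not_imp_left.2 fun hsimp => ?_
  have hinj := not_not.1 (mt (R.simplifiable hσ hR) hsimp)
  refine R.isParsing_base.eventuallyPeriodic (fun n => R.ne_nil _) <|
    eventuallyPeriodic_of_disjoint_cuts (R.α_ne_nil hσ) hinj R.isParsing R.isParsing' ?_
  have hd' : Disjoint (Set.range (R.f ∘ R.e)) (Set.range (R.f ∘ R.e')) := by
    rwa [R.cuts_eq, R.cuts_eq']
  rw [Set.range_comp, Set.range_comp] at hd'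
  exact hd'.of_image

end OneSided

section TwoSided

variable {A B : Type v} {σ : A → List B} {x x' : ℤ → A} {c c' : ℤ → ℤ} {y : ℤ → B}

/-- Two two-sided parsings differ only by the indexing of their words. -/
def SameParsing (x : ℤ → A) (c : ℤ → ℤ) (x' : ℤ → A) (c' : ℤ → ℤ) : Prop :=
  ∃ d, ∀ n, x' n = x (n + d) ∧ c' n = c (n + d)

theorem OccursAt.reverse {l : List B} {p : ℤ} (h : OccursAt l y p) :
    OccursAt l.reverse (fun n => y (-1 - n)) (-(p + l.length)) := by
  intro k hk
  rw [getElem_reverse, ← h _ (by grind)]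
  grind

theorem IsParsing.reverse (h : IsParsing σ x c y) :
    IsParsing (fun a => (σ a).reverse) (fun n => x (-1 - n)) (fun n => -c (-n))
      (fun n => y (-1 - n)) := by
  have hcut (n : ℤ) : c (-n) = c (-1 - n) + (σ (x (-1 - n))).length := by
    rw [← h.cut_succ, show -1 - n + 1 = -n by ring]
  refine ⟨fun n => ?_, fun n => hcut n ▸ (h.occursAt _).reverse⟩
  rw [length_reverse, hcut n, show -(n + 1) = -1 - n by ring]
  ring

variable [Finite A]

theorem IsParsing.right_eq_of_cut_eq (hσ : ∀ a, σ a ≠ []) (hsimp : ¬ Simplifiable σ)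
    (h : IsParsing σ x c y) (h' : IsParsing σ x' c' y) {n m : ℤ} (h0 : c n = c' m) (k : ℕ) :
    x (n + k) = x' (m + k) ∧ c (n + k) = c' (m + k) := by
  have hword {n m : ℤ} (h0 : c n = c' m) : x n = x' m := by
    by_contra hne
    refine hsimp (simplifiable_of_cut_eq_of_ne hσ ((h.shift n (c n)).restrict_nat hσ (by simp))
      ((h'.shift m (c n)).restrict_nat hσ (by simp [h0])) (by simp [h0]) (by simpa using hne))
  have hcut : c (n + k) = c' (m + k) := by
    induction k with
    | zero => simpa using h0
    | succ k ih =>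
      rw [Nat.cast_succ, ← add_assoc, ← add_assoc, h.cut_succ, h'.cut_succ, ih, hword ih]
  exact ⟨hword hcut, hcut⟩

theorem IsParsing.left_eq_of_cut_eq (hσ : ∀ a, σ a ≠ []) (hsimp : ¬ Simplifiable σ)
    (h : IsParsing σ x c y) (h' : IsParsing σ x' c' y) {n m : ℤ} (h0 : c n = c' m) (k : ℕ) :
    x (n - (k + 1)) = x' (m - (k + 1)) ∧ c (n - k) = c' (m - k) := by
  have hrev : ¬ Simplifiable fun a => (σ a).reverse := fun hs =>
    hsimp (by simpa only [reverse_reverse] using hs.reverse)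
  obtain ⟨hx, hc⟩ := h.reverse.right_eq_of_cut_eq (n := -n) (m := -m) (by simp [hσ]) hrev h'.reverse
    (by simp [h0]) k
  refine ⟨by convert hx using 2 <;> ring, ?_⟩
  rw [neg_inj] at hc
  convert hc using 2 <;> ring

theorem IsParsing.sameParsing_of_cut_eq (hσ : ∀ a, σ a ≠ []) (hsimp : ¬ Simplifiable σ)
    (h : IsParsing σ x c y) (h' : IsParsing σ x' c' y) {n m : ℤ} (h0 : c n = c' m) :
    SameParsing x c x' c' := by
  refine ⟨n - m, fun t => ?_⟩
  obtain ⟨k, hk⟩ | ⟨k, hk⟩ := (le_total m t).imp Int.le.dest Int.le.dest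
  · obtain ⟨hx, hc⟩ := h.right_eq_of_cut_eq hσ hsimp h' h0 k
    rw [← hk, show m + k + (n - m) = n + k by ring, hx, hc]
    exact ⟨rfl, rfl⟩
  · obtain ⟨-, hc⟩ := h.left_eq_of_cut_eq hσ hsimp h' h0 k
    rw [show m - (k : ℤ) = t by omega, show n - (k : ℤ) = t + (n - m) by omega] at hc
    obtain ⟨hx, -⟩ := h.right_eq_of_cut_eq hσ hsimp h' hc 0
    simp only [Nat.cast_zero, add_zero] at hx
    exact ⟨hx.symm, hc.symm⟩

theorem simplifiable_or_eventuallyPeriodic_of_not_sameParsing (hσ : ∀ a, σ a ≠ [])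
    (h : IsParsing σ x c y) (h' : IsParsing σ x' c' y) (hne : ¬ SameParsing x c x' c') :
    Simplifiable σ ∨ ∃ s, EventuallyPeriodic fun n : ℕ => y (n + s) := by
  refine or_iff_not_imp_left.2 fun hsimp => ⟨c 0, ?_⟩
  have hdisj (n m : ℤ) : c n ≠ c' m := fun h0 =>
    hne (h.sameParsing_of_cut_eq hσ hsimp h' h0)
  obtain ⟨m, -, hm⟩ := exists_cut_le_lt_int (strictMono_of_cut_succ hσ h'.cut_succ) (c 0)
  have hr := (h.shift 0 (c 0)).restrict_nat hσ (by simp)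
  have hr' := (h'.shift (m + 1) (c 0)).restrict_nat hσ (by simp [hm.le])
  refine (simplifiable_or_eventuallyPeriodic_of_disjoint_cuts hσ hr hr' ?_).resolve_left hsimp
  rw [Set.disjoint_left]
  rintro _ ⟨i, rfl⟩ ⟨j, hj⟩
  have hi : c 0 ≤ c i := (strictMono_of_cut_succ hσ h.cut_succ).monotone (by omega)
  have hj' : c' (m + 1) ≤ c' (j + (m + 1)) :=
    (strictMono_of_cut_succ hσ h'.cut_succ).monotone (by omega)
  refine hdisj i (j + (m + 1)) ?_
  simp only [add_zero] at hj
  omega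

end TwoSided

section Limits

variable {A B ι : Type*} {U : Ultrafilter ι} {i k : ι → ℕ}

/-- The two-sided sequences all of whose factors are factors of `u`. -/
def hull (u : ℕ → A) : Set (ℤ → A) := {x | FactorsSubset x u}

/-- The two-sided sequence `y` is the limit along `U` of the translates of `u` recentred at
`i L`. -/
def IsRecentredLimit (U : Ultrafilter ι) (i : ι → ℕ) (u : ℕ → A) (y : ℤ → A) : Prop :=
  ∀ n : ℤ, ∀ᶠ L in U, u (i L + n).toNat = y n

theorem eventually_natAbs_le (hi : Tendsto i U atTop) (n : ℤ) : ∀ᶠ L in U, n.natAbs ≤ i L :=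
  hi.eventually_ge_atTop _

theorem exists_eventually_eq_of_finite {S : Set B} (hS : S.Finite) {f : ι → B}
    (h : ∀ᶠ L in U, f L ∈ S) : ∃ b, ∀ᶠ L in U, f L = b := by
  obtain ⟨b, -, hb⟩ := (Ultrafilter.eventually_exists_mem_iff hS (P := fun b L => f L = b)).1
    (h.mono fun L hL => ⟨f L, hL, rfl⟩)
  exact ⟨b, hb⟩

theorem exists_isRecentredLimit [Finite A] (U : Ultrafilter ι) (i : ι → ℕ) (u : ℕ → A) :
    ∃ y, IsRecentredLimit U i u y := by
  choose y hy using fun n : ℤ => exists_eventually_eq_of_finite (U := U) Set.finite_univ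
    (f := fun L => u (i L + n).toNat) (by simp)
  exact ⟨y, hy⟩

theorem IsRecentredLimit.mem_hull {u : ℕ → A} {y : ℤ → A} (h : IsRecentredLimit U i u y)
    (hi : Tendsto i U atTop) : y ∈ hull u := by
  intro l p hl
  have hall : ∀ᶠ L in U, ∀ t ∈ Finset.range l.length, u (i L + (p + t)).toNat = y (p + t) :=
    (eventually_all_finset _).2 fun t _ => h _
  obtain ⟨L, hL, hLp⟩ := (hall.and (eventually_natAbs_le hi p)).exists
  refine ⟨(i L + p).toNat, fun t ht => ?_⟩
  rw [← hl t ht, ← hL t (Finset.mem_range.2 ht), Nat.cast_id]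
  congr 1
  omega

theorem tendsto_index_of_tendsto_cut {e : ℕ → ℕ} (he : StrictMono e)
    (hk : ∀ L, i L < e (k L + 1)) (hi : Tendsto i U atTop) : Tendsto k U atTop := by
  refine tendsto_atTop.2 fun N => (hi.eventually_ge_atTop (e N)).mono fun L hL => ?_
  exact Nat.lt_succ_iff.1 (he.lt_iff_lt.1 (hL.trans_lt (hk L)))

variable {τ : B → List A} {v : ℕ → B} {e : ℕ → ℕ} {u : ℕ → A}

theorem IsParsing.eventually_cut_eq (h : IsParsing τ v e u) (hk : Tendsto k U atTop)
    {x : ℤ → B} (hx : IsRecentredLimit U k v x) {c : ℤ → ℤ} {y : ℤ → A} (hy : IsParsing τ x c y)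
    (h0 : ∀ᶠ L in U, (e (k L) : ℤ) = i L + c 0) (n : ℤ) :
    ∀ᶠ L in U, (e (k L + n).toNat : ℤ) = i L + c n := by
  have hstep (n : ℤ) : (∀ᶠ L in U, (e (k L + (n + 1)).toNat : ℤ) = i L + c (n + 1)) ↔
      ∀ᶠ L in U, (e (k L + n).toNat : ℤ) = i L + c n := by
    refine eventually_congr ?_
    filter_upwards [hx n, eventually_natAbs_le hk n] with L hL hkL
    have hcut : e ((k L + n).toNat + 1) = e (k L + n).toNat + (τ (v (k L + n).toNat)).length :=
      h.cut_succ _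
    rw [show (k L + (n + 1)).toNat = (k L + n).toNat + 1 by omega, hcut, hL, hy.cut_succ]
    omega
  induction n using Int.induction_on with
  | zero => simpa using h0
  | succ n ih => exact (hstep _).2 ih
  | pred n ih => exact (hstep _).1 (by simpa using ih)

theorem IsParsing.isRecentredLimit (hτ : ∀ b, τ b ≠ []) (h : IsParsing τ v e u)
    {x : ℤ → B} (hx : IsRecentredLimit U k v x) {c : ℤ → ℤ} {y : ℤ → A}
    (hy : IsParsing τ x c y) (hc : ∀ n : ℤ, ∀ᶠ L in U, (e (k L + n).toNat : ℤ) = i L + c n) :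
    IsRecentredLimit U i u y := by
  intro p
  obtain ⟨n, t, ht, rfl⟩ := covers_of_cut_succ hτ hy.cut_succ p
  filter_upwards [hx n, hc n] with L hxL hcL
  have hocc := h.occursAt (k L + n).toNat
  rw [hxL] at hocc
  rw [hy.occursAt n t ht, ← hocc t ht, Nat.cast_id]
  congr 1
  omega

theorem IsParsing.exists_limit [Finite B] (hτ : ∀ b, τ b ≠ []) (h : IsParsing τ v e u)
    (hi : Tendsto i U atTop) (hk : ∀ L, e (k L) ≤ i L ∧ i L < e (k L + 1)) :
    ∃ x ∈ hull v, ∃ c y, IsParsing τ x c y ∧ IsRecentredLimit U i u y ∧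
      ∀ n : ℤ, ∀ᶠ L in U, (e (k L + n).toNat : ℤ) = i L + c n := by
  have hk' : Tendsto k U atTop :=
    tendsto_index_of_tendsto_cut (h.strictMono_nat fun _ => hτ _) (fun L => (hk L).2) hi
  obtain ⟨x, hx⟩ := exists_isRecentredLimit U k v
  obtain ⟨s, hs⟩ : ∃ s : ℤ, ∀ᶠ L in U, (e (k L) : ℤ) - i L = s := by
    refine exists_eventually_eq_of_finite (Set.finite_Icc (-(τ (x 0)).length : ℤ) 0) ?_
    filter_upwards [hx 0] with L hL
    have hcut : e (k L + 1) = e (k L) + (τ (v (k L))).length := h.cut_succ _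
    rw [add_zero, Int.toNat_natCast] at hL
    have := hk L
    rw [hcut, hL] at this
    exact ⟨by omega, by omega⟩
  obtain ⟨c, y, rfl, hy⟩ := exists_isParsing_int hτ x s
  have hc := h.eventually_cut_eq (i := i) hk' hx hy (hs.mono fun L hL => by omega)
  exact ⟨x, hx.mem_hull hk', c, y, hy, h.isRecentredLimit hτ hx hy hc, hc⟩

theorem IsRecentredLimit.eq {i' : ι → ℕ} {y y' : ℤ → A} (h : IsRecentredLimit U i u y)
    (h' : IsRecentredLimit U i' u y')
    (hii' : ∀ n : ℤ, ∀ᶠ L in U, u (i L + n).toNat = u (i' L + n).toNat) : y = y' := by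
  funext n
  obtain ⟨L, hL, hL', hLL'⟩ := ((h n).and ((h' n).and (hii' n))).exists
  rw [← hL, ← hL', hLL']

theorem exists_centre_of_mem_hull {y : ℤ → A} (hy : y ∈ hull u) (L : ℕ) :
    ∃ j, L ≤ j ∧ ∀ n : ℤ, n.natAbs ≤ L → u (j + n).toNat = y n := by
  obtain ⟨j, hj⟩ := hy _ _ (occursAt_map_range y (-L) (2 * L + 1))
  refine ⟨j + L, by omega, fun n hn => ?_⟩
  have hjn := hj (n + L).toNat (by simp only [length_map, length_range]; omega)
  rw [getElem_map, getElem_range] at hjn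
  convert hjn using 2
  · rw [Nat.cast_id]
    omega
  · omega

theorem IsParsing.exists_isParsing_of_mem_hull [Finite B] (hτ : ∀ b, τ b ≠ [])
    (h : IsParsing τ v e u) (h0 : e 0 = 0) {y : ℤ → A} (hy : y ∈ hull u) :
    ∃ x ∈ hull v, ∃ c, IsParsing τ x c y := by
  choose j hLj hj using exists_centre_of_mem_hull hy
  have htop : (hyperfilter ℕ : Filter ℕ) ≤ atTop := Nat.hyperfilter_le_atTop
  have hjtop : Tendsto j (hyperfilter ℕ) atTop :=
    (tendsto_atTop_mono hLj tendsto_id).mono_left htop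
  choose k hk using fun L =>
    exists_cut_le_lt_nat (h.strictMono_nat fun _ => hτ _) (h0.trans_le (Nat.zero_le (j L)))
  obtain ⟨x, hx, c, y', hy', hlim, -⟩ := h.exists_limit hτ hjtop hk
  have hlim' : IsRecentredLimit (hyperfilter ℕ) j u y := fun n =>
    ((eventually_ge_atTop n.natAbs).filter_mono htop).mono fun L hL => hj L n hL
  exact ⟨x, hx, c, hlim.eq hlim' (fun n => .of_forall fun _ => rfl) ▸ hy'⟩

end Limits

section UniqueParsing

variable {A B C : Type*}

/-- Recognizability in the two-sided setting: a sequence has, up to reindexing, at most one parsing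
into words of `σ` indexed by an element of `X`. -/
def UniqueParsing (σ : A → List B) (X : Set (ℤ → A)) : Prop :=
  ∀ ⦃x⦄, x ∈ X → ∀ ⦃x'⦄, x' ∈ X → ∀ ⦃c c' y⦄, IsParsing σ x c y → IsParsing σ x' c' y →
    SameParsing x c x' c'

theorem UniqueParsing.comp {α : A → List B} {τ : B → List C} (hα : ∀ a, α a ≠ [])
    (hτ : ∀ b, τ b ≠ []) {X : Set (ℤ → A)} {Z : Set (ℤ → B)} (hαX : UniqueParsing α X)
    (hτZ : UniqueParsing τ Z) (himage : ∀ x ∈ X, ∀ c z, IsParsing α x c z → z ∈ Z) :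
    UniqueParsing (fun a => (α a).flatMap τ) X := by
  intro x hx x' hx' c c' y h h'
  obtain ⟨e, z, f, hz, hy, rfl⟩ := h.exists_factorization hα hτ
  obtain ⟨e', z', f', hz', hy', rfl⟩ := h'.exists_factorization hα hτ
  obtain ⟨d, hd⟩ := hτZ (himage x hx _ _ hz) (himage x' hx' _ _ hz') hy hy'
  have hz'' := hz'.shift 0 (-d)
  simp only [add_zero, (hd _).1, neg_add_cancel_right] at hz''
  obtain ⟨d', hd'⟩ := hαX hx hx' hz hz''
  refine ⟨d', fun n => ⟨(hd' n).1, ?_⟩⟩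
  have hcut : e' n + d = e (n + d') := by simpa using (hd' n).2
  rw [Function.comp_apply, Function.comp_apply, (hd _).2, hcut]

theorem UniqueParsing.of_comp {α : A → List B} {τ : C → List A} (hα : ∀ a, α a ≠ [])
    {Z : Set (ℤ → C)} (h : UniqueParsing (fun b => (τ b).flatMap α) Z) : UniqueParsing τ Z := by
  intro z hz z' hz' c c' x hx hx'
  obtain ⟨g, q, -, hq⟩ := exists_isParsing_int hα x 0
  obtain ⟨d, hd⟩ := h hz hz' (hx.comp hq) (hx'.comp hq)
  exact ⟨d, fun n =>
    ⟨(hd n).1, (strictMono_of_cut_succ hα hq.cut_succ).injective (hd n).2⟩⟩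

theorem UniqueParsing.of_comp_right {α : A → List B} {τ : C → List A} (hτ : ∀ b, τ b ≠ [])
    {Z : Set (ℤ → C)} {X : Set (ℤ → A)} (h : UniqueParsing (fun b => (τ b).flatMap α) Z)
    (hlift : ∀ x ∈ X, ∃ z ∈ Z, ∃ c, IsParsing τ z c x) : UniqueParsing α X := by
  intro x hx x' hx' e e' p he he'
  obtain ⟨z, hz, k, hk⟩ := hlift x hx
  obtain ⟨z', hz', k', hk'⟩ := hlift x' hx'
  obtain ⟨d, hd⟩ := h hz hz' (hk.comp he) (hk'.comp he')
  obtain ⟨s, hs⟩ : ∃ s, s = k d - k' 0 := ⟨_, rfl⟩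
  have hks := hk.shift d s
  simp only [← (hd _).1] at hks
  obtain rfl := hks.cuts_eq hk' (m := 0) (by simp [hs])
  obtain rfl := hk'.eq_of_covers hks (covers_of_cut_succ hτ hk'.cut_succ)
  have hes := he.shift s 0
  simp only [add_zero, sub_zero] at hes
  have hcuts : e' = fun n => e (n + s) := by
    refine he'.cuts_eq hes (m := k d - s) ?_
    simpa using (hd 0).2
  exact ⟨s, fun n => ⟨rfl, congrFun hcuts n⟩⟩

/- If recognizability failed, limits of longer and longer windows around the offending positions
would give two parsings of one two-sided sequence, only one of them with a cut at the origin. -/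
theorem UniqueParsing.exists_window [Finite A] {σ : A → List B} (hσ : ∀ a, σ a ≠ []) {v : ℕ → A}
    {e : ℕ → ℕ} {u : ℕ → B} (hv : IsParsing σ v e u) (h0 : e 0 = 0)
    (h : UniqueParsing σ (hull v)) :
    ∃ R, ∀ i j, (∀ t < 2 * R, u (i + t) = u (j + t)) → i + R ∈ Set.range e →
      j + R ∈ Set.range e := by
  by_contra! hbad
  choose i j hij hi hj using hbad
  choose k hk using hi
  have he := hv.strictMono_nat fun _ => hσ _
  choose k' hk' using fun R => exists_cut_le_lt_nat he (h0.trans_le (Nat.zero_le (j R + R)))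
  have htop : (hyperfilter ℕ : Filter ℕ) ≤ atTop := Nat.hyperfilter_le_atTop
  have htendsto (i : ℕ → ℕ) : Tendsto (fun R => i R + R) (hyperfilter ℕ) atTop :=
    (tendsto_atTop_mono (fun R => Nat.le_add_left R (i R)) tendsto_id).mono_left htop
  obtain ⟨x, hx, c, y, hy, hlim, hc⟩ := hv.exists_limit hσ (htendsto i)
    (k := k) fun R => ⟨(hk R).le, (hk R).symm.trans_lt (he (Nat.lt_succ_self _))⟩
  obtain ⟨x', hx', c', y', hy', hlim', hc'⟩ := hv.exists_limit hσ (htendsto j) hk'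
  obtain rfl : y = y' := hlim.eq hlim' fun n => by
    filter_upwards [(eventually_gt_atTop n.natAbs).filter_mono htop] with R hR
    have := hij R (R + n).toNat (by omega)
    convert this using 2 <;> omega
  obtain ⟨d, hd⟩ := h hx hx' hy hy'
  have hc0 : c 0 = 0 := by
    obtain ⟨R, hR⟩ := (hc 0).exists
    rw [add_zero, Int.toNat_natCast, hk] at hR
    omega
  obtain ⟨R, hR⟩ := (hc' (-d)).exists
  rw [(hd _).2, neg_add_cancel, hc0, add_zero] at hR
  exact hj R ⟨_, Int.ofNat.inj hR⟩

end UniqueParsing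

section Induction

/-- No element of the one-sided subshift generated by `u` is eventually periodic. -/
def HullAperiodic {A : Type*} (u : ℕ → A) : Prop :=
  ∀ w : ℕ → A, FactorsSubset w u → ¬ EventuallyPeriodic w

theorem IsParsing.mem_hull {A B : Type*} {σ : A → List B} (hσ : ∀ a, σ a ≠ []) {u : ℕ → A}
    {e : ℕ → ℕ} {v : ℕ → B} (hu : IsParsing σ u e v) {x : ℤ → A} (hx : x ∈ hull u) {c : ℤ → ℤ}
    {y : ℤ → B} (h : IsParsing σ x c y) : y ∈ hull v :=
  FactorsSubset.of_isParsing hσ h (covers_of_cut_succ hσ h.cut_succ) hu hx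

theorem HullAperiodic.of_isParsing {A B : Type*} {τ : B → List A} (hτ : ∀ b, τ b ≠ [])
    {v : ℕ → B} {f : ℕ → ℕ} {u : ℕ → A} (hu : IsParsing τ v f u) (hap : HullAperiodic u) :
    HullAperiodic v := by
  intro w hw hper
  obtain ⟨c, y, h0, hy⟩ := exists_isParsing_nat hτ w
  exact hap y (.of_isParsing hτ hy (hy.covers_nat (fun _ => hτ _) h0) hu hw)
    (hy.eventuallyPeriodic (fun _ => hτ _) hper)

variable {A : Type v} {σ : A → List A} {u : ℕ → A} {e : ℕ → ℕ}

theorem uniqueParsing_hull_of_not_simplifiable [Finite A] (hσ : ∀ a, σ a ≠ [])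
    (hu : IsParsing σ u e u) (hap : HullAperiodic u) (hsimp : ¬ Simplifiable σ) :
    UniqueParsing σ (hull u) := by
  intro x hx x' _ c c' y h h'
  by_contra hne
  obtain ⟨s, hs⟩ := (simplifiable_or_eventuallyPeriodic_of_not_sameParsing hσ h h' hne).resolve_left
    hsimp
  refine hap _ (fun l p hl => ?_) hs
  refine hu.mem_hull hσ hx h l (p + s) fun t ht => ?_
  rw [← hl t ht]
  simp [add_right_comm]

theorem uniqueParsing_hull_comp_of_swap {A B : Type*} [Finite B] {α : A → List B} {τ : B → List A}
    (hα : ∀ a, α a ≠ []) (hτ : ∀ b, τ b ≠ []) {u : ℕ → A} {v : ℕ → B} {e f : ℕ → ℕ}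
    (hv : IsParsing α u e v) (hu : IsParsing τ v f u) (hf : f 0 = 0)
    (h : UniqueParsing (fun b => (τ b).flatMap α) (hull v)) :
    UniqueParsing (fun a => (α a).flatMap τ) (hull u) :=
  (h.of_comp_right hτ fun _ => hu.exists_isParsing_of_mem_hull hτ hf).comp hα hτ
    (h.of_comp hα) fun _ hx _ _ => hv.mem_hull hα hx

/- Induction on the size of the alphabet: if `σ = τ ∘ α` through a smaller alphabet, then `α ∘ τ` is
a substitution fixing the image of `u` under `α`. -/
theorem uniqueParsing_hull [Finite A] (hσ : ∀ a, σ a ≠ []) (hu : IsParsing σ u e u) (h0 : e 0 = 0)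
    (hap : HullAperiodic u) : UniqueParsing σ (hull u) := by
  induction hN : Nat.card A using Nat.strong_induction_on generalizing A e with
  | _ N ih =>
    by_cases hsimp : Simplifiable σ
    · obtain ⟨B, _, α, τ, hcard, hα, hτ, hατ⟩ := hsimp
      obtain rfl : (fun a => (α a).flatMap τ) = σ := funext hατ
      obtain ⟨g, v, f, hv, hu', hg, hf⟩ := hu.exists_factorization_nat hα hτ h0
      refine uniqueParsing_hull_comp_of_swap hα hτ hv hu' hf ?_
      exact ih _ (hN ▸ hcard) (fun b => flatMap_ne_nil hα (hτ b)) (hu'.comp hv)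
        (by rw [Function.comp_apply, hf, hg]) (hap.of_isParsing hτ hu') rfl
    · exact uniqueParsing_hull_of_not_simplifiable hσ hu hap hsimp

end Induction

section FixedPoints

variable {A : Type*} {σ : A → List A} {u : ℕ → A}

/-- The `n`-th natural 1-cutting point of `u`. -/
def cutPoint (σ : A → List A) (u : ℕ → A) (n : ℕ) : ℕ := (substWord σ (seg u 0 n)).length

theorem cutPoint_zero (σ : A → List A) (u : ℕ → A) : cutPoint σ u 0 = 0 := by
  simp [cutPoint, seg, substWord]

theorem cutPoints_one (σ : A → List A) (u : ℕ → A) :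
    cutPoints σ u 1 = Set.range (cutPoint σ u) :=
  Set.ext fun _ => exists_congr fun _ => eq_comm

theorem IsFixedPoint.isParsing (h : IsFixedPoint σ u) : IsParsing σ u (cutPoint σ u) u := by
  have hsucc (n : ℕ) : substWord σ (seg u 0 (n + 1)) = substWord σ (seg u 0 n) ++ σ (u n) := by
    simp [seg, substWord, range_succ]
  refine ⟨fun n => by rw [cutPoint, hsucc, length_append, cutPoint, Nat.cast_id], fun n => ?_⟩
  have hocc := occursAt_seg u 0 (substWord σ (seg u 0 (n + 1))).length
  rw [← h, hsucc, occursAt_append, zero_add] at hocc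
  exact hocc.2

theorem IsParsing.substPow {e : ℕ → ℕ} (h : IsParsing σ u e u) (p : ℕ) :
    IsParsing (fun a => substPow σ p [a]) u e^[p] u := by
  induction p with
  | zero => exact ⟨fun n => rfl, fun n => occursAt_cons.2 ⟨rfl, occursAt_nil _ _⟩⟩
  | succ p ih =>
    rw [Function.iterate_succ']
    simp only [_root_.substPow, Function.iterate_succ_apply']
    exact ih.comp h

theorem pow_mul_length_le_length_substPow {m : ℕ} (hσ : ∀ a, m ≤ (σ a).length) (p : ℕ)
    (w : List A) : m ^ p * w.length ≤ (substPow σ p w).length := by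
  induction p with
  | zero => simp [substPow]
  | succ p ih =>
    rw [substPow, Function.iterate_succ_apply', pow_succ', mul_assoc]
    exact (Nat.mul_le_mul_left m ih).trans (mul_length_le_length_flatMap hσ _)

end FixedPoints

section Recurrence

/-- A set of natural numbers with bounded gaps. -/
def IsSyndetic (S : Set ℕ) : Prop := ∃ R, ∀ i, ∃ j ∈ S, i ≤ j ∧ j ≤ i + R

theorem IsSyndetic.mono {S S' : Set ℕ} (hS : IsSyndetic S) (h : S ⊆ S') : IsSyndetic S' :=
  hS.imp fun _ hR i => (hR i).imp fun _ hj => ⟨h hj.1, hj.2⟩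

theorem IsSyndetic.image {S : Set ℕ} (hS : IsSyndetic S) {c : ℕ → ℕ} (hc : StrictMono c)
    (h0 : c 0 = 0) {K : ℕ} (hK : ∀ n, c (n + 1) ≤ c n + K) : IsSyndetic (c '' S) := by
  obtain ⟨R, hR⟩ := hS
  have hlip (n m : ℕ) : c (n + m) ≤ c n + m * K := by
    induction m with
    | zero => simp
    | succ m ih =>
      rw [← Nat.add_assoc, Nat.succ_mul]
      have := hK (n + m)
      omega
  refine ⟨(R + 1) * K, fun i => ?_⟩
  obtain ⟨n, hni, hin⟩ := exists_cut_le_lt_nat hc (h0.trans_le (Nat.zero_le i))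
  obtain ⟨j, hj, hnj, hjn⟩ := hR (n + 1)
  refine ⟨c j, ⟨j, hj, rfl⟩, hin.le.trans (hc.monotone hnj), ?_⟩
  calc c j ≤ c (n + (R + 1)) := hc.monotone (by omega)
    _ ≤ c n + (R + 1) * K := hlip _ _
    _ ≤ i + (R + 1) * K := by omega

theorem AperiodicSeq.hullAperiodic {A : Type*} {u : ℕ → A} (hap : AperiodicSeq u)
    (hrec : ∀ m, IsSyndetic {j | ∀ s < m, u (j + s) = u s}) : HullAperiodic u := by
  rintro w hw ⟨p, hp, hper⟩
  obtain ⟨N, hN⟩ := eventually_atTop.1 hper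
  refine hap p hp (funext fun n => ?_)
  obtain ⟨R, hR⟩ := hrec (n + p + 1)
  obtain ⟨i, hi⟩ := hw _ N (occursAt_seg w N (N + (R + (n + p + 1))))
  obtain ⟨j, hj, hij, hji⟩ := hR i
  have hwu (s : ℕ) (hs : s < n + p + 1) : w (N + (j - i) + s) = u s := by
    have hocc := occursAt_seg w N (N + (R + (n + p + 1))) (j - i + s) (by grind [length_seg])
    have hocc' := hi (j - i + s) (by grind [length_seg])
    rw [← hocc, Nat.cast_id, ← add_assoc, ← add_assoc, Nat.add_sub_cancel' hij] at hocc'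
    rw [← hj s hs, hocc']
  rw [← hwu n (by omega), ← hwu (n + p) (by omega), ← add_assoc, hN _ (by omega)]

variable {A B : Type*} [Finite A]

theorem exists_forall_length_le (σ : A → List B) : ∃ K, ∀ a, (σ a).length ≤ K := by
  obtain ⟨K, hK⟩ := (Set.finite_range fun a => (σ a).length).bddAbove
  exact ⟨K, fun a => hK ⟨a, rfl⟩⟩

theorem IsParsing.exists_cut_succ_le {σ : A → List B} {x : ℕ → A} {c : ℕ → ℕ} {y : ℕ → B}
    (h : IsParsing σ x c y) : ∃ K, ∀ n, c (n + 1) ≤ c n + K := by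
  obtain ⟨K, hK⟩ := exists_forall_length_le σ
  exact ⟨K, fun n => (h.cut_succ n).trans_le (Nat.add_le_add_left (hK _) _)⟩

variable {σ : A → List A} {u : ℕ → A}

theorem IsParsing.isSyndetic_letter {e : ℕ → ℕ} (h : IsParsing σ u e u) (h0 : e 0 = 0) {b : A}
    (hb : ∀ a, b ∈ σ a) : IsSyndetic {n | u n = b} := by
  have he := h.strictMono_nat fun n => ne_nil_of_mem (hb (u n))
  obtain ⟨K, hK⟩ := h.exists_cut_succ_le
  refine ⟨2 * K, fun i => ?_⟩
  obtain ⟨n, hni, hin⟩ := exists_cut_le_lt_nat he (h0.trans_le (Nat.zero_le i))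
  obtain ⟨t, ht, htb⟩ := getElem_of_mem (hb (u (n + 1)))
  have hcut : e (n + 1 + 1) = e (n + 1) + (σ (u (n + 1))).length := h.cut_succ _
  have := hK n
  have := hK (n + 1)
  exact ⟨e (n + 1) + t, (h.occursAt _ t ht).trans htb, by omega, by omega⟩

theorem IsParsing.isSyndetic_prefix {e : ℕ → ℕ} (h : IsParsing σ u e u) (h0 : e 0 = 0)
    (hσ : ∀ a, σ a ≠ []) (hS : IsSyndetic {n | u n = u 0}) {m : ℕ} (hm : m ≤ (σ (u 0)).length) :
    IsSyndetic {j | ∀ s < m, u (j + s) = u s} := by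
  obtain ⟨K, hK⟩ := h.exists_cut_succ_le
  refine (hS.image (h.strictMono_nat fun _ => hσ _) h0 hK).mono ?_
  rintro _ ⟨n, hn, rfl⟩ s hs
  have hocc := h.occursAt n
  have hocc0 := h.occursAt 0
  rw [hn] at hocc
  rw [h0] at hocc0
  simpa using (hocc s (hs.trans_le hm)).trans (hocc0 s (hs.trans_le hm)).symm

theorem IsPrimitiveSubst.isSyndetic_prefix [Nontrivial A] (hp : IsPrimitiveSubst σ)
    (h : IsFixedPoint σ u) (m : ℕ) : IsSyndetic {j | ∀ s < m, u (j + s) = u s} := by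
  obtain ⟨k, hk⟩ := hp
  set ρ : A → List A := fun a => substPow σ k [a]
  have hρ (a : A) : 2 ≤ (ρ a).length := by
    obtain ⟨b, b', hne⟩ := exists_pair_ne A
    have hnodup : [b, b'].Nodup := by simpa using hne
    exact (hnodup.subperm fun a _ => hk a _).length_le
  have hzero (p : ℕ) {f : ℕ → ℕ} (hf : f 0 = 0) : f^[p] 0 = 0 := Function.iterate_fixed hf p
  have hparse : IsParsing ρ u (cutPoint σ u)^[k] u := h.isParsing.substPow k
  have h0 := hzero k (cutPoint_zero σ u)
  have hlen (a : A) : 2 ^ m ≤ (substPow ρ m [a]).length := by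
    simpa using pow_mul_length_le_length_substPow hρ m [a]
  exact (hparse.substPow m).isSyndetic_prefix (hzero m h0)
    (fun a => ne_nil_of_length_pos ((Nat.two_pow_pos m).trans_le (hlen a)))
    (hparse.isSyndetic_letter h0 fun a => hk _ a) (Nat.lt_two_pow_self.le.trans (hlen _))

end Recurrence

section CommonCuts

theorem exists_last_failure {P : ℕ → Prop} {R N : ℕ} (h0 : ¬ P 0)
    (hP : ∀ t, R ≤ t → t ≤ N → P t) : ∃ t ≤ R, ¬ P t ∧ ∀ s, t < s → s ≤ N → P s := by
  classical
  refine ⟨_, Nat.findGreatest_le R, Nat.findGreatest_spec (P := (¬ P ·)) R.zero_le h0,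
    fun s hs hsN => ?_⟩
  rcases le_total s R with hsR | hRs
  · exact not_not.1 (Nat.findGreatest_is_greatest hs hsR)
  · exact hP s hRs hsN

variable {e : ℕ → ℕ} {K M a b i j : ℕ}

theorem exists_common_next_cut (he : StrictMono e) (hK : ∀ n, e (n + 1) ≤ e n + K) (hKM : K ≤ M)
    (hsync : ∀ t, 0 < t → t ≤ M → (a + t ∈ Set.range e ↔ b + t ∈ Set.range e))
    (hj : e j ≤ a ∧ a < e (j + 1)) (hi : e i ≤ b ∧ b < e (i + 1)) :
    ∃ s, 0 < s ∧ s ≤ K ∧ e (j + 1) = a + s ∧ e (i + 1) = b + s := by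
  have hnext {k n : ℕ} (h : e k < e n) : e (k + 1) ≤ e n := he.monotone (he.lt_iff_lt.1 h)
  have := hK j
  have := hK i
  obtain ⟨s, hs⟩ := Nat.exists_eq_add_of_lt hj.2
  obtain ⟨s', hs'⟩ := Nat.exists_eq_add_of_lt hi.2
  obtain ⟨n, hn⟩ := (hsync (s + 1) (by omega) (by omega)).1 ⟨j + 1, hs⟩
  obtain ⟨n', hn'⟩ := (hsync (s' + 1) (by omega) (by omega)).2 ⟨i + 1, hs'⟩
  have := hnext (k := i) (n := n) (by omega)
  have := hnext (k := j) (n := n') (by omega)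
  exact ⟨s + 1, by omega, by omega, hs, by omega⟩

theorem exists_common_cut (he : StrictMono e) (hK : ∀ n, e (n + 1) ≤ e n + K)
    (hsync : ∀ t, 0 < t → t ≤ M → (a + t ∈ Set.range e ↔ b + t ∈ Set.range e))
    (hj : e j ≤ a ∧ a < e (j + 1)) (hi : e i ≤ b ∧ b < e (i + 1)) (k : ℕ)
    (hk : (k + 1) * K ≤ M) :
    ∃ s ≤ (k + 1) * K, e (j + (k + 1)) = a + s ∧ e (i + (k + 1)) = b + s := by
  induction k with
  | zero =>
    obtain ⟨s, -, hsK, hjs, his⟩ := exists_common_next_cut he hK (by omega) hsync hj hi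
    exact ⟨s, by omega, hjs, his⟩
  | succ k ih =>
    rw [Nat.succ_mul] at hk ⊢
    obtain ⟨s, hsK, hjs, his⟩ := ih (by omega)
    obtain ⟨s', -, hsK', hjs', his'⟩ := exists_common_next_cut (M := M - s) he hK (by omega)
      (fun t ht htM => by simpa only [add_assoc] using hsync (s + t) (by omega) (by omega))
      ⟨hjs.le, hjs ▸ he (Nat.lt_succ_self _)⟩ ⟨his.le, his ▸ he (Nat.lt_succ_self _)⟩
    exact ⟨s + s', by omega, hjs'.trans (add_assoc ..), his'.trans (add_assoc ..)⟩

end CommonCuts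

section Gaps

variable {A : Type*} {σ : A → List A} {u : ℕ → A}

/-- A gap of natural 1-cutting points of length `L`, as in the second condition of the theorem:
the cutting points following `i` and `j` are spaced alike over `L` letters, but `σ (u i)` extends
strictly further to the left than `σ (u j)`. -/
def HasSuffixGap (σ : A → List A) (u : ℕ → A) (L : ℕ) : Prop :=
  ∃ i j : ℕ, (σ (u j) <:+ σ (u i) ∧ σ (u j) ≠ σ (u i)) ∧
    ∀ k : ℕ, 1 ≤ k → k ≤ L → σ (u (i + k)) = σ (u (j + k))

theorem seg_eq_seg_iff {i j L : ℕ} :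
    seg u i (i + L) = seg u j (j + L) ↔ ∀ s < L, u (i + s) = u (j + s) := by
  simp [seg]

theorem OccursAt.congr {l : List A} {a b : ℕ} (h : OccursAt l u a)
    (hab : ∀ s < l.length, u (a + s) = u (b + s)) : OccursAt l u b :=
  fun s hs => (hab s hs).symm.trans (h s hs)

variable {e : ℕ → ℕ} {K L : ℕ}

theorem IsParsing.hasSuffixGap_of_synchronized (h : IsParsing σ u e u) (he : StrictMono e)
    (hK : ∀ n, e (n + 1) ≤ e n + K) (h0 : e 0 = 0) {a b : ℕ} (ha : a ∈ Set.range e)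
    (hb : b ∉ Set.range e)
    (hsync : ∀ t, 0 < t → t ≤ (L + 1) * K → (a + t ∈ Set.range e ↔ b + t ∈ Set.range e))
    (hagree : ∀ s < (L + 1) * K, u (a + s) = u (b + s)) : HasSuffixGap σ u L := by
  obtain ⟨j, rfl⟩ := ha
  obtain ⟨i, hib, hbi⟩ := exists_cut_le_lt_nat he (h0.trans_le b.zero_le)
  have hlt : e i < b := hib.lt_of_ne fun h => hb ⟨i, h⟩
  have hcut (n : ℕ) : e (n + 1) = e n + (σ (u n)).length := h.cut_succ n
  have hcommon (k : ℕ) (hk : k ≤ L) := exists_common_cut he hK hsync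
    ⟨le_rfl, he (Nat.lt_succ_self j)⟩ ⟨hib, hbi⟩ k (Nat.mul_le_mul_right K (by omega))
  refine ⟨i, j, ?_, fun k hk1 hkL => ?_⟩
  · obtain ⟨s, hs, hjs, his⟩ := hcommon 0 (Nat.zero_le L)
    rw [zero_add] at hjs his
    have : (0 + 1) * K ≤ (L + 1) * K := Nat.mul_le_mul_right K (by omega)
    have := hcut i
    have := hcut j
    have hdrop : OccursAt ((σ (u i)).drop (b - e i)) u b := by
      have hocc := h.occursAt i
      rw [← take_append_drop (b - e i) (σ (u i)), occursAt_append] at hocc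
      convert hocc.2 using 1
      grind
    have hsuffix : σ (u j) = (σ (u i)).drop (b - e i) :=
      ((h.occursAt j).congr fun s hs => hagree s (by grind)).eq hdrop (by grind)
    exact ⟨hsuffix ▸ drop_suffix _ _, fun heq => by grind⟩
  · obtain ⟨k, rfl⟩ := Nat.exists_eq_add_of_le' hk1
    obtain ⟨s, -, hjs, his⟩ := hcommon k (by omega)
    obtain ⟨s', hs', hjs', his'⟩ := hcommon (k + 1) hkL
    have : (k + 1 + 1) * K ≤ (L + 1) * K := Nat.mul_le_mul_right K (by omega)
    have := hcut (i + (k + 1))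
    have := hcut (j + (k + 1))
    rw [← add_assoc] at hjs' his'
    have hocc := h.occursAt (j + (k + 1))
    rw [hjs] at hocc
    refine ((hocc.congr (b := b + s) fun t ht => ?_).eq (his ▸ h.occursAt _) (by omega)).symm
    rw [add_assoc, add_assoc]
    exact hagree _ (by omega)

end Gaps

section Recognizability

variable {A : Type*} {σ : A → List A} {u : ℕ → A}

/- Unique parsing synchronizes the cutting points away from the left end of a long common factor;
the gap sits at the last place where they still disagree. -/
theorem hasSuffixGap_of_not_unilaterallyRecognizable [Finite A] (hσ : ∀ a, σ a ≠ [])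
    (hfix : IsFixedPoint σ u) (hap : HullAperiodic u) (hrec : ¬ UnilaterallyRecognizable σ u)
    (L : ℕ) : HasSuffixGap σ u L := by
  have hu := hfix.isParsing
  have h0 := cutPoint_zero σ u
  have he := hu.strictMono_nat fun _ => hσ _
  obtain ⟨K, hK⟩ := hu.exists_cut_succ_le
  obtain ⟨R, hR⟩ := (uniqueParsing_hull hσ hu h0 hap).exists_window hσ hu h0
  simp only [UnilaterallyRecognizable, not_exists, not_and, not_forall, cutPoints_one] at hrec
  obtain ⟨i, j, hseg, hi, hj⟩ := hrec (2 * R + (L + 1) * K + 1) (by omega)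
  rw [seg_eq_seg_iff] at hseg
  have hsync (t : ℕ) (hRt : R ≤ t) (ht : t ≤ R + (L + 1) * K) :
      i + t ∈ Set.range (cutPoint σ u) ↔ j + t ∈ Set.range (cutPoint σ u) := by
    obtain ⟨t, rfl⟩ := Nat.exists_eq_add_of_le' hRt
    have hwindow (s : ℕ) (hs : s < 2 * R) : u (i + t + s) = u (j + t + s) := by
      rw [add_assoc, add_assoc]
      exact hseg _ (by omega)
    rw [← add_assoc, ← add_assoc]
    exact ⟨hR _ _ hwindow, hR _ _ fun s hs => (hwindow s hs).symm⟩
  obtain ⟨t, htR, hfail, hlast⟩ :=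
    exists_last_failure (fun hiff => hj (hiff.1 hi)) hsync
  have hsync' (s : ℕ) (hs : 0 < s) (hsL : s ≤ (L + 1) * K) :
      i + t + s ∈ Set.range (cutPoint σ u) ↔ j + t + s ∈ Set.range (cutPoint σ u) := by
    simpa only [add_assoc] using hlast (t + s) (by omega) (by omega)
  have hagree (s : ℕ) (hs : s < (L + 1) * K) : u (i + t + s) = u (j + t + s) := by
    simpa only [add_assoc] using hseg (t + s) (by omega)
  by_cases hit : i + t ∈ Set.range (cutPoint σ u)
  · exact hu.hasSuffixGap_of_synchronized he hK h0 hit (by tauto) hsync' hagree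
  · exact hu.hasSuffixGap_of_synchronized he hK h0 (by tauto) hit
      (fun s hs hsL => (hsync' s hs hsL).symm) fun s hs => (hagree s hs).symm

theorem flatMap_seg_congr {i j : ℕ} (L : ℕ)
    (h : ∀ k, 1 ≤ k → k ≤ L → σ (u (i + k)) = σ (u (j + k))) :
    (seg u (i + 1) (i + 1 + L)).flatMap σ = (seg u (j + 1) (j + 1 + L)).flatMap σ := by
  simp only [seg, Nat.add_sub_cancel_left, flatMap_map]
  exact flatMap_congr fun k hk => by
    simpa only [add_assoc, add_comm 1] using h (k + 1) (by omega) (by simpa using hk)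

theorem not_unilaterallyRecognizable_of_hasSuffixGap (hσ : ∀ a, σ a ≠ [])
    (hfix : IsFixedPoint σ u) (hgap : ∀ L, 1 ≤ L → HasSuffixGap σ u L) :
    ¬ UnilaterallyRecognizable σ u := by
  rintro ⟨L, hL, hrec⟩
  obtain ⟨i, j, ⟨⟨w, hw⟩, hne⟩, htail⟩ := hgap L hL
  have hu := hfix.isParsing
  have he := hu.strictMono_nat fun _ => hσ _
  set V := σ (u j) ++ (seg u (j + 1) (j + 1 + L)).flatMap σ with hV
  have hfactor (n : ℕ) : OccursAt (σ (u n) ++ (seg u (n + 1) (n + 1 + L)).flatMap σ) u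
      (cutPoint σ u n) :=
    (hu.flatMap (occursAt_cons.2 ⟨rfl, occursAt_seg u (n + 1) (n + 1 + L)⟩)).2
  have hVj : OccursAt V u (cutPoint σ u j) := hfactor j
  have hVi : OccursAt V u (cutPoint σ u i + w.length) := by
    have hocc := hfactor i
    rw [← hw, append_assoc, occursAt_append, flatMap_seg_congr L htail] at hocc
    exact hocc.2
  have hVL : L ≤ V.length := by
    have := length_le_length_flatMap hσ (seg u (j + 1) (j + 1 + L))
    grind [length_seg]
  rw [cutPoints_one] at hrec
  obtain ⟨n, hn⟩ := hrec (cutPoint σ u j) (cutPoint σ u i + w.length)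
    (seg_eq_seg_iff.2 fun s hs => (hVj s (by omega)).trans (hVi s (by omega)).symm) ⟨j, rfl⟩
  have hwpos : 0 < w.length :=
    length_pos_of_ne_nil fun hnil => hne (by simpa [hnil] using hw)
  have hjpos := length_pos_of_ne_nil (hσ (u j))
  have hcut : cutPoint σ u (i + 1) = cutPoint σ u i + (σ (u i)).length := hu.cut_succ i
  rw [← hw, length_append] at hcut
  have hin : i < n := he.lt_iff_lt.1 (by omega)
  have hni : n < i + 1 := he.lt_iff_lt.1 (by omega)
  omega

theorem stmt_0_general [Finite A] (hσ : ∀ a, σ a ≠ []) (hfix : IsFixedPoint σ u)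
    (hap : HullAperiodic u) :
    ¬ UnilaterallyRecognizable σ u ↔
      ∀ L : ℕ, 1 ≤ L → ∃ i j : ℕ, (σ (u j) <:+ σ (u i) ∧ σ (u j) ≠ σ (u i)) ∧
        ∀ k : ℕ, 1 ≤ k → k ≤ L → σ (u (i + k)) = σ (u (j + k)) :=
  ⟨fun hrec L _ => hasSuffixGap_of_not_unilaterallyRecognizable hσ hfix hap hrec L,
    not_unilaterallyRecognizable_of_hasSuffixGap hσ hfix⟩

end Recognizability

/-- B. Mossé's unilateral recognizability theorem (Theorem 1.1): `σ` is not unilaterally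
recognizable iff for each `L` there are positions `i, j` with `σ(u_j)` a strict suffix of
`σ(u_i)` and `σ(u_{i+k}) = σ(u_{j+k})` for `1 ≤ k ≤ L`. -/
theorem stmt_0 (A : Type*) [Fintype A] [DecidableEq A] [Nonempty A]
    (h2 : 2 ≤ Fintype.card A)
    (σ : A → List A) (hσne : ∀ a, σ a ≠ [])
    (hprim : IsPrimitiveSubst σ)
    (u : ℕ → A) (hfix : IsFixedPoint σ u) (hap : AperiodicSeq u) :
    (¬ UnilaterallyRecognizable σ u) ↔
      ∀ L : ℕ, 1 ≤ L → ∃ i j : ℕ,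
        (σ (u j) <:+ σ (u i) ∧ σ (u j) ≠ σ (u i)) ∧
        ∀ k : ℕ, 1 ≤ k → k ≤ L → σ (u (i + k)) = σ (u (j + k)) := by
  have : Nontrivial A := Fintype.one_lt_card_iff_nontrivial.1 h2
  exact stmt_0_general hσne hfix (hap.hullAperiodic fun m => hprim.isSyndetic_prefix hfix m)
end

section
/- Let p₀ = K²(C⁴(K+1)+2C²+1) · (Σ_{n = C²(K+1)+2}^{(K+1)C⁶+2C⁴+C²+2} n) + 1 and L₀ = (C⁴(K+1)+2C²+1)·S_{p₀}. Then the substitution σ is bilaterally recognizable under the index L₀: for all i, j ≥ L₀, if u_{[i−L₀, i+L₀)} = u_{[j−L₀, j+L₀)} and i ∈ E₁, then j ∈ E₁. -/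
open List Filter

/-!
Around `i`, take at each level `p ≤ p₀` the window of `R` consecutive blocks `σ^p(u_k)` that begins
with the block containing `i`. By hypothesis the window is copied around `j`, and its copy is
covered by `n` consecutive blocks, where `n` is bounded independently of `p`. Since the factor
complexity is at most linear, the pigeonhole principle gives two levels `p < q` at which both the
windows and the covers are coded by the same words of `u`. Applying `σ^(q-1-p)` to the copy at
level `p` and moving it along these coincidences yields a level `q - 1` copy of the window of
level `q`. Its image under `σ` starts in the same block as the copy around `j`, so the two must
coincide: otherwise `u` would contain a high power. Hence `σ` maps matching positions to matching
positions, and the cutting point `i` is carried to a cutting point `j`.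
-/

namespace Recognizability

section Segments

variable {A : Type*} {u : ℕ → A} {x y z m n d : ℕ}

@[simp]
lemma length_seg (u : ℕ → A) (i j : ℕ) : (seg u i j).length = j - i := by simp [seg]

lemma seg_append_seg (u : ℕ → A) {i j k : ℕ} (hij : i ≤ j) (hjk : j ≤ k) :
    seg u i j ++ seg u j k = seg u i k := by
  obtain ⟨m, rfl⟩ := Nat.exists_eq_add_of_le hij
  obtain ⟨n, rfl⟩ := Nat.exists_eq_add_of_le hjk
  simp only [seg, show i + m + n - i = m + n by omega, Nat.add_sub_cancel_left, List.range_add,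
    List.map_append, List.map_map]
  simp [Function.comp_def, Nat.add_assoc]

lemma seg_infix_seg (u : ℕ → A) {i j k l : ℕ} (hij : i ≤ j) (hjk : j ≤ k) (hkl : k ≤ l) :
    seg u j k <:+: seg u i l :=
  ⟨seg u i j, seg u k l, by
    rw [seg_append_seg u hij hjk, seg_append_seg u (hij.trans hjk) hkl]⟩

lemma take_drop_seg (u : ℕ → A) {i j a b : ℕ} (h : i + a + b ≤ j) :
    ((seg u i j).drop a).take b = seg u (i + a) (i + a + b) := by
  rw [← seg_append_seg u (i := i) (j := i + a) (by omega) (by omega : i + a ≤ j),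
    ← seg_append_seg u (i := i + a) (j := i + a + b) (by omega) h,
    List.drop_left' (by simp), List.take_left' (by simp)]

lemma mem_factors (u : ℕ → A) (i n : ℕ) : seg u i (i + n) ∈ factors u n := ⟨i, rfl⟩

lemma finite_factors [Finite A] (u : ℕ → A) (n : ℕ) : (factors u n).Finite :=
  (List.finite_length_eq A n).subset <| by rintro w ⟨i, rfl⟩; simp

/-- The words of length `m` at the positions `x` and `y` of `u` coincide. -/
def Agree (u : ℕ → A) (x y m : ℕ) : Prop := ∀ t < m, u (x + t) = u (y + t)

lemma seg_eq_seg_iff : seg u x (x + m) = seg u y (y + m) ↔ Agree u x y m := by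
  simp [seg, Agree]

namespace Agree

lemma symm (h : Agree u x y m) : Agree u y x m := fun t ht => (h t ht).symm

lemma trans (h : Agree u x y m) (h' : Agree u y z m) : Agree u x z m :=
  fun t ht => (h t ht).trans (h' t ht)

lemma shift (h : Agree u x y m) {a : ℕ} (ha : a + n ≤ m) : Agree u (x + a) (y + a) n :=
  fun t ht => by
    rw [Nat.add_assoc, Nat.add_assoc]
    exact h (a + t) (by omega)

lemma mono (h : Agree u x y m) (hn : n ≤ m) : Agree u x y n :=
  fun t ht => h t (ht.trans_le hn)

lemma period (h : Agree u x y m) (h' : Agree u x (y + d) m) : Agree u x (x + d) (m - d) :=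
  fun t ht => by
    rw [h' t (by omega), Nat.add_assoc, Nat.add_assoc]
    exact (h (d + t) (by omega)).symm

end Agree

lemma exists_agree_of_infix {i j : ℕ} (h : seg u x (x + m) <:+: seg u i j) (hij : i ≤ j) :
    ∃ y, i ≤ y ∧ y + m ≤ j ∧ Agree u x y m := by
  obtain ⟨s, t, hst⟩ := h
  have hlen : s.length + (m + t.length) = j - i := by simpa using congrArg List.length hst
  refine ⟨i + s.length, by omega, by omega, seg_eq_seg_iff.1 ?_⟩
  rw [← take_drop_seg u (i := i) (j := j) (by omega), ← hst, List.append_assoc,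
    List.drop_left, List.take_left' (by simp)]

/-- `u` contains no power `w ^ (k + 1)` of a nonempty word `w`; such a power is encoded as a factor
of length `(k + 1) * d` with period `d = |w|`. -/
def PowerFree (u : ℕ → A) (k : ℕ) : Prop := ∀ x d, 0 < d → ¬ Agree u x (x + d) (k * d)

/-- `u` has at most `K * d` factors of each positive length `d`. The alphabet is meant to be finite,
as `Set.ncard` vanishes on infinite sets. -/
def LinearComplexity (u : ℕ → A) (K : ℕ) : Prop := ∀ d, 0 < d → (factors u d).ncard ≤ K * d

lemma LinearComplexity.ncard_biUnion_factors_le {K : ℕ} (h : LinearComplexity u K)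
    {J : Finset ℕ} (hJ : ∀ n ∈ J, 0 < n) :
    (⋃ n ∈ J, factors u n).ncard ≤ K * ∑ n ∈ J, n := by
  rw [Finset.mul_sum]
  exact (J.set_ncard_biUnion_le _).trans (Finset.sum_le_sum fun n hn => h n (hJ n hn))

lemma LinearComplexity.exists_lt_agree [Finite A] {K R P : ℕ} (h : LinearComplexity u K)
    (hR : 0 < R) {J : Finset ℕ} (hJ : ∀ n ∈ J, 0 < n) {w v n : ℕ → ℕ}
    (hn : ∀ p ≤ P, n p ∈ J) (hP : K ^ 2 * R * ∑ n ∈ J, n < P + 1) :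
    ∃ p q, p < q ∧ q ≤ P ∧ n p = n q ∧ Agree u (w p) (w q) R ∧ Agree u (v p) (v q) (n p) := by
  let code (p : ℕ) : List A × List A := (seg u (w p) (w p + R), seg u (v p) (v p + n p))
  let T : Set (List A × List A) := factors u R ×ˢ ⋃ n ∈ J, factors u n
  have hT : T.Finite :=
    (finite_factors u R).prod (J.finite_toSet.biUnion fun n _ => finite_factors u n)
  have hcard : T.ncard < (Set.Iic P).ncard := by
    calc T.ncard = (factors u R).ncard * (⋃ n ∈ J, factors u n).ncard := Set.ncard_prod
      _ ≤ K * R * (K * ∑ n ∈ J, n) := Nat.mul_le_mul (h R hR) (h.ncard_biUnion_factors_le hJ)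
      _ = K ^ 2 * R * ∑ n ∈ J, n := by ring
      _ < P + 1 := hP
      _ = (Set.Iic P).ncard := by simp [Set.ncard_eq_toFinset_card']
  have hcode : ∀ p ∈ Set.Iic P, code p ∈ T := fun p hp =>
    ⟨mem_factors u _ _, Set.mem_biUnion (hn p hp) (mem_factors u _ _)⟩
  obtain ⟨p, hp, q, hq, hne, heq⟩ :=
    Set.exists_ne_map_eq_of_ncard_lt_of_maps_to hcard hcode hT
  wlog hlt : p < q generalizing p q
  · exact this q hq p hp hne.symm heq.symm (by omega)
  obtain ⟨hw, hv⟩ := Prod.mk.inj heq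
  have hnpq : n p = n q := by simpa using congrArg List.length hv
  rw [← hnpq] at hv
  exact ⟨p, q, hlt, hq, hnpq, seg_eq_seg_iff.1 hw, seg_eq_seg_iff.1 hv⟩

end Segments

section Substitutions

variable {A : Type*} (σ : A → List A)

lemma substPow_succ (p : ℕ) (w : List A) :
    substPow σ (p + 1) w = substWord σ (substPow σ p w) :=
  Function.iterate_succ_apply' _ _ _

lemma substPow_add (p q : ℕ) (w : List A) :
    substPow σ (p + q) w = substPow σ p (substPow σ q w) :=
  Function.iterate_add_apply _ _ _ _

lemma substPow_append (p : ℕ) (v w : List A) :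
    substPow σ p (v ++ w) = substPow σ p v ++ substPow σ p w := by
  induction p with
  | zero => rfl
  | succ p ih => simp only [substPow_succ, ih, substWord, List.flatMap_append]

lemma substPow_nil (p : ℕ) : substPow σ p [] = [] := by
  induction p with
  | zero => rfl
  | succ p ih => rw [substPow_succ, ih]; rfl

lemma substPow_infix {v w : List A} (p : ℕ) (h : v <:+: w) :
    substPow σ p v <:+: substPow σ p w := by
  obtain ⟨s, t, rfl⟩ := h
  exact ⟨substPow σ p s, substPow σ p t, by simp only [substPow_append]⟩

lemma length_substPow (p : ℕ) (w : List A) :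
    (substPow σ p w).length = (w.map fun a => (substPow σ p [a]).length).sum := by
  induction w with
  | nil => simp [substPow_nil]
  | cons a w ih => rw [← List.singleton_append, substPow_append]; simp [ih]

variable {σ}

lemma length_le_length_substWord (hσ : ∀ a, σ a ≠ []) (w : List A) :
    w.length ≤ (substWord σ w).length := by
  rw [substWord, List.length_flatMap]
  simpa using List.card_nsmul_le_sum (w.map fun a => (σ a).length) 1
    (by simpa [Nat.one_le_iff_ne_zero] using fun a _ => hσ a)

lemma monotone_length_substPow (hσ : ∀ a, σ a ≠ []) (w : List A) :
    Monotone fun p => (substPow σ p w).length :=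
  monotone_nat_of_le_succ fun p => by
    rw [substPow_succ]
    exact length_le_length_substWord hσ _

end Substitutions

section CutPositions

variable {A : Type*} (σ : A → List A) (u : ℕ → A)

/-- The increasing enumeration `n ↦ |σ^p(u_[0,n))|` of the natural `p`-cutting points. -/
def cut (p n : ℕ) : ℕ := (substPow σ p (seg u 0 n)).length

/-- The length `|σ^p(u_[x,x+m))|` of the `m` consecutive `p`-blocks starting with the `x`-th. -/
def imageLength (p x m : ℕ) : ℕ := (substPow σ p (seg u x (x + m))).length

lemma cut_zero (p : ℕ) : cut σ u p 0 = 0 := by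
  simp [cut, seg, substPow_nil]

lemma cut_add (p x m : ℕ) : cut σ u p (x + m) = cut σ u p x + imageLength σ u p x m := by
  rw [cut, ← seg_append_seg u (Nat.zero_le x) (Nat.le_add_right x m), substPow_append,
    List.length_append, cut, imageLength]

lemma cut_mono (p : ℕ) : Monotone (cut σ u p) :=
  monotone_nat_of_le_succ fun n => by rw [cut_add]; omega

variable {σ u} {p r x y m : ℕ}

lemma le_imageLength (hσ : ∀ a, σ a ≠ []) : m ≤ imageLength σ u p x m :=
  calc m = (seg u x (x + m)).length := by simp
    _ ≤ imageLength σ u p x m := monotone_length_substPow hσ _ (Nat.zero_le p)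

lemma cut_strictMono (hσ : ∀ a, σ a ≠ []) (p : ℕ) : StrictMono (cut σ u p) :=
  strictMono_nat_of_lt_succ fun n => by
    have : 1 ≤ imageLength σ u p n 1 := le_imageLength hσ
    rw [cut_add]
    omega

lemma exists_cut_le_lt (hσ : ∀ a, σ a ≠ []) (p z : ℕ) :
    ∃ n, cut σ u p n ≤ z ∧ z < cut σ u p (n + 1) := by
  have hmono := cut_strictMono (u := u) hσ p
  induction z with
  | zero => exact ⟨0, (cut_zero σ u p).le, by simpa only [cut_zero] using hmono Nat.zero_lt_one⟩
  | succ z ih =>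
    obtain ⟨n, hle, hlt⟩ := ih
    rcases Nat.lt_or_ge (z + 1) (cut σ u p (n + 1)) with h | h
    · exact ⟨n, by omega, h⟩
    · exact ⟨n + 1, h, lt_of_le_of_lt hlt (hmono (Nat.lt_succ_self (n + 1)))⟩

lemma substPow_seg_zero (hfix : IsFixedPoint σ u) (p n : ℕ) :
    substPow σ p (seg u 0 n) = seg u 0 (cut σ u p n) := by
  induction p with
  | zero => simp [cut, substPow]
  | succ p ih =>
    rw [cut, substPow_succ, ih]
    exact hfix _

lemma substPow_seg (hfix : IsFixedPoint σ u) (p x m : ℕ) :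
    substPow σ p (seg u x (x + m)) =
      seg u (cut σ u p x) (cut σ u p x + imageLength σ u p x m) := by
  have h := substPow_seg_zero hfix p (x + m)
  rw [← seg_append_seg u (Nat.zero_le x) (Nat.le_add_right x m), substPow_append,
    substPow_seg_zero hfix, cut_add,
    ← seg_append_seg u (Nat.zero_le (cut σ u p x)) (Nat.le_add_right _ _)] at h
  exact List.append_cancel_left h

lemma cut_comp (hfix : IsFixedPoint σ u) (r p n : ℕ) :
    cut σ u (r + p) n = cut σ u r (cut σ u p n) := by
  rw [cut, substPow_add, substPow_seg_zero hfix p n]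
  rfl

lemma imageLength_comp (hfix : IsFixedPoint σ u) (r p x m : ℕ) :
    imageLength σ u (r + p) x m =
      imageLength σ u r (cut σ u p x) (imageLength σ u p x m) := by
  have h := cut_comp hfix r p (x + m)
  rw [cut_add, cut_add, cut_add, cut_comp hfix] at h
  exact Nat.add_left_cancel h

lemma Agree.imageLength_eq (h : Agree u x y m) :
    imageLength σ u p x m = imageLength σ u p y m := by
  rw [imageLength, seg_eq_seg_iff.2 h, imageLength]

lemma Agree.image (hfix : IsFixedPoint σ u) (h : Agree u x y m) (p : ℕ) :
    Agree u (cut σ u p x) (cut σ u p y) (imageLength σ u p x m) := by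
  rw [← seg_eq_seg_iff, ← substPow_seg hfix, seg_eq_seg_iff.2 h, substPow_seg hfix,
    h.imageLength_eq]

lemma Agree.mem_cutPoints (hσ : ∀ a, σ a ≠ []) (h : Agree u x y m) {i j : ℕ}
    (hi : i ∈ cutPoints σ u p) (hxi : cut σ u p x ≤ i) (him : i ≤ cut σ u p (x + m))
    (hij : cut σ u p y + i = j + cut σ u p x) : j ∈ cutPoints σ u p := by
  obtain ⟨k, rfl⟩ : ∃ k, i = cut σ u p k := hi
  have hmono := cut_strictMono (u := u) hσ p
  obtain ⟨t, rfl⟩ := Nat.exists_eq_add_of_le (hmono.le_iff_le.1 hxi)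
  have ht : t ≤ m := Nat.le_of_add_le_add_left (hmono.le_iff_le.1 him)
  have hlen := (h.mono ht).imageLength_eq (σ := σ) (p := p)
  have hj : j = cut σ u p (y + t) := by
    rw [cut_add] at hij ⊢
    omega
  exact ⟨y + t, hj⟩

end CutPositions

section BlockLengths

variable {A : Type*} [Fintype A] [Nonempty A] (σ : A → List A) (u : ℕ → A)

lemma length_le_Sp (p : ℕ) (a : A) : (substPow σ p [a]).length ≤ Sp σ p :=
  Finset.le_sup' (fun a => (substPow σ p [a]).length) (Finset.mem_univ a)

lemma Ip_le_length (p : ℕ) (a : A) : Ip σ p ≤ (substPow σ p [a]).length :=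
  Finset.inf'_le (fun a => (substPow σ p [a]).length) (Finset.mem_univ a)

lemma length_substPow_le (p : ℕ) (w : List A) :
    (substPow σ p w).length ≤ w.length * Sp σ p := by
  rw [length_substPow]
  simpa only [List.length_map, smul_eq_mul] using List.sum_le_card_nsmul _ (Sp σ p) <|
    List.forall_mem_map.2 fun a (_ : a ∈ w) => length_le_Sp σ p a

lemma le_length_substPow (p : ℕ) (w : List A) :
    w.length * Ip σ p ≤ (substPow σ p w).length := by
  rw [length_substPow]
  simpa only [List.length_map, smul_eq_mul] using List.card_nsmul_le_sum _ (Ip σ p) <|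
    List.forall_mem_map.2 fun a (_ : a ∈ w) => Ip_le_length σ p a

lemma imageLength_le (p x m : ℕ) : imageLength σ u p x m ≤ m * Sp σ p := by
  simpa [imageLength] using length_substPow_le σ p (seg u x (x + m))

lemma mul_Ip_le_imageLength (p x m : ℕ) : m * Ip σ p ≤ imageLength σ u p x m := by
  simpa [imageLength] using le_length_substPow σ p (seg u x (x + m))

lemma exists_Ip_eq (p : ℕ) : ∃ a, Ip σ p = (substPow σ p [a]).length :=
  let ⟨a, _, ha⟩ :=
    Finset.exists_mem_eq_inf' Finset.univ_nonempty fun a => (substPow σ p [a]).length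
  ⟨a, ha⟩

lemma exists_Sp_eq (p : ℕ) : ∃ a, Sp σ p = (substPow σ p [a]).length :=
  let ⟨a, _, ha⟩ :=
    Finset.exists_mem_eq_sup' Finset.univ_nonempty fun a => (substPow σ p [a]).length
  ⟨a, ha⟩

lemma Ip_mul_Ip_le (p q : ℕ) : Ip σ q * Ip σ p ≤ Ip σ (p + q) := by
  obtain ⟨a, ha⟩ := exists_Ip_eq σ (p + q)
  rw [ha, substPow_add]
  refine le_trans (Nat.mul_le_mul_right _ ?_) (le_length_substPow σ p _)
  simpa using le_length_substPow σ q [a]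

lemma Ip_zero : Ip σ 0 = 1 := by
  obtain ⟨a, ha⟩ := exists_Ip_eq σ 0
  simpa [substPow] using ha

variable {σ}

lemma Ip_pos (hσ : ∀ a, σ a ≠ []) (p : ℕ) : 0 < Ip σ p := by
  obtain ⟨a, ha⟩ := exists_Ip_eq σ p
  rw [ha]
  exact monotone_length_substPow hσ [a] (Nat.zero_le p)

lemma monotone_Sp (hσ : ∀ a, σ a ≠ []) : Monotone (Sp σ) := fun p q hpq => by
  obtain ⟨a, ha⟩ := exists_Sp_eq σ p
  rw [ha]
  exact (monotone_length_substPow hσ [a] hpq).trans (length_le_Sp σ q a)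

lemma two_le_Ip [Nontrivial A] {k : ℕ} (hk : ∀ a b : A, a ∈ substPow σ k [b]) : 2 ≤ Ip σ k := by
  classical
  obtain ⟨b, hb⟩ := exists_Ip_eq σ k
  have huniv : (substPow σ k [b]).toFinset = Finset.univ := by ext a; simpa using hk a b
  calc 2 ≤ Fintype.card A := Fintype.one_lt_card
    _ = (substPow σ k [b]).toFinset.card := by rw [huniv, Finset.card_univ]
    _ ≤ Ip σ k := hb ▸ List.toFinset_card_le _

lemma exists_le_Ip [Nontrivial A] (hprim : IsPrimitiveSubst σ) (N : ℕ) : ∃ p, N ≤ Ip σ p := by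
  obtain ⟨k, hk⟩ := hprim
  have hpow : ∀ n, 2 ^ n ≤ Ip σ (k * n) := fun n => by
    induction n with
    | zero => simp [Ip_zero]
    | succ n ih =>
      calc 2 ^ n * 2 ≤ Ip σ (k * n) * Ip σ k := Nat.mul_le_mul ih (two_le_Ip hk)
        _ ≤ Ip σ (k + k * n) := Ip_mul_Ip_le σ k (k * n)
        _ = Ip σ (k * (n + 1)) := by rw [Nat.mul_succ, Nat.add_comm]
  exact ⟨k * N, Nat.lt_two_pow_self.le.trans (hpow N)⟩

variable {u}

lemma exists_cover (hσ : ∀ a, σ a ≠ []) (p s : ℕ) {m : ℕ} (hm : 0 < m) :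
    ∃ v n, cut σ u p v ≤ s ∧ s < cut σ u p (v + 1) ∧ s + m ≤ cut σ u p (v + n) ∧
      m ≤ n * Sp σ p ∧ n * Ip σ p ≤ m + 2 * Ip σ p := by
  obtain ⟨v, hv, hv'⟩ := exists_cut_le_lt (u := u) hσ p s
  obtain ⟨e, he, he'⟩ := exists_cut_le_lt (u := u) hσ p (s + m - 1)
  have hve : v < e + 1 := (cut_strictMono hσ p).lt_iff_lt.1 (show cut σ u p v < _ by omega)
  obtain ⟨n, rfl⟩ := Nat.exists_eq_add_of_le (Nat.lt_succ_iff.1 hve)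
  refine ⟨v, n + 1, hv, hv', by rw [← Nat.add_assoc]; omega, ?_, ?_⟩
  · have hlen := imageLength_le σ u p v (n + 1)
    rw [Nat.add_assoc, cut_add] at he'
    omega
  · rcases n with _ | n
    · omega
    · have hlen := mul_Ip_le_imageLength σ u p (v + 1) n
      rw [show v + (n + 1) = v + 1 + n by omega, cut_add] at he
      linarith [show imageLength σ u p (v + 1) n ≤ m by omega]

end BlockLengths

section Gaps

variable {A : Type*} {σ : A → List A} {u : ℕ → A}

lemma isGap_mono {w : List A} {g g' : ℕ} (h : IsGap u w g) (hg : g ≤ g') : IsGap u w g' :=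
  fun i => (h i).trans (seg_infix_seg u le_rfl (by omega) (by omega))

lemma isGap_gapConst [Finite A] {w : List A} (hw : w ∈ factors u 2) (hgap : ∃ g, IsGap u w g) :
    IsGap u w (gapConst u) := by
  have hmin : IsGap u w (minGap u w) := Nat.sInf_mem (s := {g | IsGap u w g}) hgap
  have hbdd : BddAbove {m | ∃ w ∈ factors u 2, m = minGap u w} := by
    refine (((finite_factors u 2).image (minGap u)).subset ?_).bddAbove
    rintro _ ⟨w, hw, rfl⟩
    exact Set.mem_image_of_mem _ hw
  exact isGap_mono hmin (le_csSup hbdd ⟨w, hw, rfl⟩)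

lemma exists_isGap_of_infix_substPow [Finite A] (hσ : ∀ a, σ a ≠ [])
    (hfix : IsFixedPoint σ u) {q : ℕ} {w : List A} (hw : ∀ b, w <:+: substPow σ q [b]) :
    ∃ g, IsGap u w g := by
  have := Fintype.ofFinite A
  have : Nonempty A := ⟨u 0⟩
  refine ⟨2 * Sp σ q, fun i => ?_⟩
  obtain ⟨n, hn, hn'⟩ := exists_cut_le_lt (u := u) hσ q i
  have hblock : substPow σ q [u (n + 1)] =
      seg u (cut σ u q (n + 1)) (cut σ u q (n + 1 + 1)) := by
    rw [cut_add σ u q (n + 1) 1, ← substPow_seg hfix]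
    simp [seg]
  have hlen := imageLength_le σ u q n 2
  have hend : cut σ u q (n + 1 + 1) = cut σ u q n + imageLength σ u q n 2 := cut_add σ u q n 2
  exact (hblock ▸ hw (u (n + 1))).trans
    (seg_infix_seg u hn'.le (cut_mono σ u q (Nat.le_succ _)) (by omega))

lemma exists_isGap [Finite A] [Nontrivial A] (hσ : ∀ a, σ a ≠ []) (hprim : IsPrimitiveSubst σ)
    (hfix : IsFixedPoint σ u) {m : ℕ} {w : List A} (hw : w ∈ factors u m) :
    ∃ g, IsGap u w g := by
  have := Fintype.ofFinite A
  obtain ⟨n, rfl⟩ := hw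
  obtain ⟨p, hp⟩ := exists_le_Ip hprim (n + m)
  obtain ⟨k, hk⟩ := hprim
  have hlen : n + m ≤ cut σ u p 1 := by
    have hblock := mul_Ip_le_imageLength σ u p 0 1
    rw [← Nat.zero_add 1, cut_add, cut_zero]
    omega
  have hprefix : seg u n (n + m) <:+: substPow σ p [u 0] := by
    have : seg u 0 1 = [u 0] := by simp [seg]
    rw [← this, substPow_seg_zero hfix]
    exact seg_infix_seg u (Nat.zero_le n) (Nat.le_add_right n m) hlen
  refine exists_isGap_of_infix_substPow hσ hfix (q := p + k) fun b => ?_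
  rw [substPow_add]
  exact hprefix.trans (substPow_infix σ p ((List.singleton_infix_iff _ _).2 (hk (u 0) b)))

end Gaps

section PowersAndComplexity

variable {A : Type*} [Fintype A] [Nonempty A] {σ : A → List A} {u : ℕ → A}

-- Every two-block word `σ^p(u_n u_{n+1})` occurs inside the long factor of period `d`, and it is
-- long enough to compare `u z` with `u (z + d)` for each `z` in its first block.
lemma periodic_of_agree (hσ : ∀ a, σ a ≠ []) (hfix : IsFixedPoint σ u) {g : ℕ}
    (hgap : ∀ w ∈ factors u 2, IsGap u w g) {p x d M : ℕ} (hd : d ≤ Ip σ p)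
    (hM : (g + 1) * Sp σ p ≤ M) (h : Agree u x (x + d) M) (z : ℕ) : u (z + d) = u z := by
  obtain ⟨n, hn, hn'⟩ := exists_cut_le_lt (u := u) hσ p z
  obtain ⟨k, hk, hk'⟩ := exists_cut_le_lt (u := u) hσ p x
  obtain ⟨m, hkm, hmg, hnm⟩ :=
    exists_agree_of_infix (hgap _ (mem_factors u n 2) (k + 1)) (by omega)
  obtain ⟨s, rfl⟩ := Nat.exists_eq_add_of_le hn
  have hlen : s + d < imageLength σ u p n 2 := by
    have hcut : cut σ u p (n + 1 + 1) = cut σ u p n + imageLength σ u p n 2 := cut_add σ u p n 2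
    have := mul_Ip_le_imageLength σ u p (n + 1) 1
    rw [cut_add] at hcut
    omega
  have hx : x ≤ cut σ u p m := hk'.le.trans (cut_mono σ u p hkm)
  have hend : cut σ u p m + imageLength σ u p n 2 ≤ x + M :=
    calc cut σ u p m + imageLength σ u p n 2 = cut σ u p (m + 2) := by
          rw [cut_add, hnm.imageLength_eq]
      _ ≤ cut σ u p (k + (g + 1)) := cut_mono σ u p (by omega)
      _ ≤ cut σ u p k + (g + 1) * Sp σ p := by
          rw [cut_add]; exact Nat.add_le_add_left (imageLength_le σ u p k _) _
      _ ≤ x + M := by omega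
  have himage := hnm.image hfix p
  obtain ⟨a, ha⟩ := Nat.exists_eq_add_of_le hx
  have hper := h (a + s) (by omega)
  calc u (cut σ u p n + s + d) = u (cut σ u p m + (s + d)) := by
        rw [Nat.add_assoc]; exact himage (s + d) hlen
    _ = u (cut σ u p m + s) := by
        rw [ha, show x + a + (s + d) = x + d + (a + s) by omega, ← hper, Nat.add_assoc]
    _ = u (cut σ u p n + s) := (himage s (by omega)).symm

lemma ncard_factors_le (hσ : ∀ a, σ a ≠ []) (hfix : IsFixedPoint σ u) {p d : ℕ}
    (hd : d ≤ Ip σ p) : (factors u d).ncard ≤ Fintype.card A ^ 2 * Sp σ p := by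
  let f : (A × A) × Fin (Sp σ p) → List A :=
    fun t => ((substPow σ p [t.1.1, t.1.2]).drop t.2).take d
  have hsub : factors u d ⊆ Set.range f := by
    rintro _ ⟨x, rfl⟩
    obtain ⟨n, hn, hn'⟩ := exists_cut_le_lt (u := u) hσ p x
    obtain ⟨s, rfl⟩ := Nat.exists_eq_add_of_le hn
    have hcut : cut σ u p (n + 1 + 1) = cut σ u p n + imageLength σ u p n 2 := cut_add σ u p n 2
    have hfirst := imageLength_le σ u p n 1
    have hsecond := mul_Ip_le_imageLength σ u p (n + 1) 1
    rw [cut_add] at hcut hn'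
    have hpair : seg u n (n + 2) = [u n, u (n + 1)] := by simp [seg, List.range_succ]
    refine ⟨((u n, u (n + 1)), ⟨s, by omega⟩), ?_⟩
    simp only [f]
    rw [← hpair, substPow_seg hfix, take_drop_seg u (by rw [cut_add] at hcut; omega)]
  calc (factors u d).ncard ≤ (Set.range f).ncard := Set.ncard_le_ncard hsub
    _ ≤ Nat.card ((A × A) × Fin (Sp σ p)) := by
        rw [← Set.image_univ, ← Set.ncard_univ]; exact Set.ncard_image_le
    _ = Fintype.card A ^ 2 * Sp σ p := by simp [sq]

end PowersAndComplexity

section WeightedLength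

variable {A : Type*} [Fintype A] [DecidableEq A] {σ : A → List A} {lam : ℝ} {β : A → ℝ}

lemma sum_map_eq_sum_count_mul (β : A → ℝ) (w : List A) :
    (w.map β).sum = ∑ a, (w.count a : ℝ) * β a := by
  simp only [Finset.sum_list_map_count, nsmul_eq_mul]
  exact Finset.sum_subset (Finset.subset_univ _) fun a _ ha => by
    rw [List.count_eq_zero_of_not_mem (by simpa using ha), Nat.cast_zero, zero_mul]

lemma sum_map_substWord (heig : (incMatrixR σ).mulVec β = lam • β) (w : List A) :
    ((substWord σ w).map β).sum = lam * (w.map β).sum := by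
  induction w with
  | nil => simp [substWord]
  | cons a w ih =>
    have hletter : ((σ a).map β).sum = lam * β a := by
      rw [sum_map_eq_sum_count_mul]
      exact congrFun heig a
    rw [substWord] at ih
    simp only [substWord, List.flatMap_cons, List.map_append, List.sum_append, ih, hletter,
      List.map_cons, List.sum_cons, mul_add]

lemma sum_map_substPow (heig : (incMatrixR σ).mulVec β = lam • β) (p : ℕ) (w : List A) :
    ((substPow σ p w).map β).sum = lam ^ p * (w.map β).sum := by
  induction p with
  | zero => simp [substPow]
  | succ p ih => rw [substPow_succ, sum_map_substWord heig, ih, pow_succ', mul_assoc]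

end WeightedLength

section Growth

variable {A : Type*} [Fintype A] [Nonempty A] {σ : A → List A} {u : ℕ → A} {lam : ℝ} {β : A → ℝ}

lemma le_Cst_mul (hβ : ∀ a, 0 < β a) (a b : A) : β a ≤ Cst β * β b := by
  set M := Finset.univ.sup' Finset.univ_nonempty β
  set m := Finset.univ.inf' Finset.univ_nonempty β
  have hm_pos : 0 < m := (Finset.lt_inf'_iff _).2 fun b _ => hβ b
  calc β a ≤ M := Finset.le_sup' β (Finset.mem_univ a)
    _ = M / m * m := (div_mul_cancel₀ M hm_pos.ne').symm
    _ ≤ Cst β * β b := mul_le_mul (Nat.le_ceil _) (Finset.inf'_le β (Finset.mem_univ b))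
        hm_pos.le (Nat.cast_nonneg _)

lemma sum_map_le_length_mul (hβ : ∀ a, 0 < β a) (a : A) (w : List A) :
    (w.map β).sum ≤ w.length * (Cst β * β a) := by
  simpa only [List.length_map, nsmul_eq_mul] using List.sum_le_card_nsmul (w.map β) (Cst β * β a) <|
    List.forall_mem_map.2 fun b _ => le_Cst_mul hβ b a

lemma length_mul_le_sum_map (hβ : ∀ a, 0 < β a) (a : A) (w : List A) :
    w.length * β a ≤ Cst β * (w.map β).sum := by
  rw [← List.sum_map_mul_left]
  simpa only [List.length_map, nsmul_eq_mul] using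
    List.card_nsmul_le_sum (w.map fun b => Cst β * β b) (β a) <|
      List.forall_mem_map.2 fun b _ => le_Cst_mul hβ a b

lemma mul_le_Kst_mul {c S d : ℕ} (hS : (S : ℝ) ≤ lam * (Cst β : ℝ) ^ 2 * d)
    (hc : (c : ℝ) ≤ max (2 * ((gapConst u : ℝ) + 1)) ((Fintype.card A : ℝ) ^ 2)) :
    c * S ≤ Kst u lam β * d := by
  set M := max (2 * ((gapConst u : ℝ) + 1)) ((Fintype.card A : ℝ) ^ 2)
  have hM : 0 ≤ M := (Nat.cast_nonneg c).trans hc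
  have h : (c * S : ℝ) ≤ Kst u lam β * d :=
    calc (c * S : ℝ) ≤ M * (lam * (Cst β : ℝ) ^ 2 * d) := mul_le_mul hc hS S.cast_nonneg hM
      _ = lam * (Cst β : ℝ) ^ 2 * M * d := by ring
      _ ≤ Kst u lam β * d := mul_le_mul_of_nonneg_right (Nat.le_ceil _) d.cast_nonneg
  exact_mod_cast h

variable [DecidableEq A]

lemma length_substPow_le_Cst_mul_pow (hβ : ∀ a, 0 < β a)
    (heig : (incMatrixR σ).mulVec β = lam • β) (p : ℕ) (a : A) :
    ((substPow σ p [a]).length : ℝ) ≤ Cst β * lam ^ p := by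
  refine le_of_mul_le_mul_right ?_ (hβ a)
  calc _ ≤ Cst β * ((substPow σ p [a]).map β).sum := length_mul_le_sum_map hβ a _
    _ = Cst β * lam ^ p * β a := by simp [sum_map_substPow heig, mul_assoc]

lemma pow_le_Cst_mul_length (hβ : ∀ a, 0 < β a)
    (heig : (incMatrixR σ).mulVec β = lam • β) (p : ℕ) (a : A) :
    lam ^ p ≤ Cst β * ((substPow σ p [a]).length : ℝ) := by
  refine le_of_mul_le_mul_right ?_ (hβ a)
  calc lam ^ p * β a = ((substPow σ p [a]).map β).sum := by simp [sum_map_substPow heig]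
    _ ≤ (substPow σ p [a]).length * (Cst β * β a) := sum_map_le_length_mul hβ a _
    _ = Cst β * ((substPow σ p [a]).length : ℝ) * β a := by ring

lemma eigenvalue_nonneg (hβ : ∀ a, 0 < β a) (heig : (incMatrixR σ).mulVec β = lam • β) :
    0 ≤ lam := by
  obtain ⟨a⟩ : Nonempty A := inferInstance
  have hsum : 0 ≤ ((substPow σ 1 [a]).map β).sum :=
    List.sum_nonneg (List.forall_mem_map.2 fun b _ => (hβ b).le)
  rw [sum_map_substPow heig] at hsum
  exact nonneg_of_mul_nonneg_left (by simpa using hsum) (hβ a)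

lemma Sp_add_le (hβ : ∀ a, 0 < β a) (heig : (incMatrixR σ).mulVec β = lam • β) (p r : ℕ) :
    (Sp σ (p + r) : ℝ) ≤ lam ^ r * (Cst β : ℝ) ^ 2 * Ip σ p := by
  obtain ⟨a, ha⟩ := exists_Sp_eq σ (p + r)
  obtain ⟨b, hb⟩ := exists_Ip_eq σ p
  have hlam := eigenvalue_nonneg hβ heig
  calc (Sp σ (p + r) : ℝ) ≤ Cst β * lam ^ (p + r) := by
        rw [ha]; exact length_substPow_le_Cst_mul_pow hβ heig _ a
    _ = lam ^ r * Cst β * lam ^ p := by ring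
    _ ≤ lam ^ r * Cst β * (Cst β * Ip σ p) := by
        rw [hb]; gcongr; exact pow_le_Cst_mul_length hβ heig p b
    _ = lam ^ r * (Cst β : ℝ) ^ 2 * Ip σ p := by ring

lemma Sp_le_mul_Ip (hβ : ∀ a, 0 < β a) (heig : (incMatrixR σ).mulVec β = lam • β) (p : ℕ) :
    Sp σ p ≤ Cst β ^ 2 * Ip σ p := by
  have h := Sp_add_le hβ heig p 0
  rw [pow_zero, one_mul] at h
  exact_mod_cast h

lemma exists_scale [Nontrivial A] (hprim : IsPrimitiveSubst σ) (hβ : ∀ a, 0 < β a)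
    (heig : (incMatrixR σ).mulVec β = lam • β) {d : ℕ} (hd : 0 < d) :
    ∃ p, d ≤ Ip σ p ∧ (Sp σ p : ℝ) ≤ lam * (Cst β : ℝ) ^ 2 * d := by
  have hex : ∃ p, d < Ip σ p := exists_le_Ip hprim (d + 1)
  have hlam := eigenvalue_nonneg hβ heig
  refine ⟨Nat.find hex, (Nat.find_spec hex).le, ?_⟩
  rcases hfind : Nat.find hex with _ | p
  · have := Nat.find_spec hex
    rw [hfind, Ip_zero] at this
    omega
  · have hp : Ip σ p ≤ d := not_lt.1 (Nat.find_min hex (by omega))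
    calc (Sp σ (p + 1) : ℝ) ≤ lam ^ 1 * (Cst β : ℝ) ^ 2 * Ip σ p := Sp_add_le hβ heig p 1
      _ ≤ lam * (Cst β : ℝ) ^ 2 * d := by rw [pow_one]; gcongr

lemma powerFree_Kst [Nontrivial A] (hσ : ∀ a, σ a ≠ []) (hprim : IsPrimitiveSubst σ)
    (hfix : IsFixedPoint σ u) (hap : AperiodicSeq u) (hβ : ∀ a, 0 < β a)
    (heig : (incMatrixR σ).mulVec β = lam • β) : PowerFree u (Kst u lam β) := by
  intro x d hd hpow
  obtain ⟨p, hp, hS⟩ := exists_scale hprim hβ heig hd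
  have hlong : (gapConst u + 1) * Sp σ p ≤ Kst u lam β * d := by
    refine mul_le_Kst_mul hS (le_max_of_le_left ?_)
    push_cast
    linarith [(gapConst u).cast_nonneg (α := ℝ)]
  have hgap : ∀ w ∈ factors u 2, IsGap u w (gapConst u) := fun w hw =>
    isGap_gapConst hw (exists_isGap hσ hprim hfix hw)
  exact hap d hd (funext (periodic_of_agree hσ hfix hgap hp hlong hpow))

lemma linearComplexity_Kst [Nontrivial A] (hσ : ∀ a, σ a ≠ []) (hprim : IsPrimitiveSubst σ)
    (hfix : IsFixedPoint σ u) (hβ : ∀ a, 0 < β a)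
    (heig : (incMatrixR σ).mulVec β = lam • β) : LinearComplexity u (Kst u lam β) := by
  intro d hd
  obtain ⟨p, hp, hS⟩ := exists_scale hprim hβ heig hd
  exact (ncard_factors_le hσ hfix hp).trans
    (mul_le_Kst_mul hS (le_max_of_le_right (by push_cast; exact le_rfl)))

end Growth

section Windows

variable {A : Type*} {σ : A → List A} {u : ℕ → A}

/-- The data of a copied window: the `R` consecutive `p`-blocks starting with the `w`-th occur again
at position `s`, where they start in the `v`-th `p`-block and are covered by the `n` consecutive
`p`-blocks from there on. -/
structure WindowCopy (σ : A → List A) (u : ℕ → A) (p w R s v n : ℕ) : Prop where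
  agree : Agree u (cut σ u p w) s (imageLength σ u p w R)
  start_ge : cut σ u p v ≤ s
  start_lt : s < cut σ u p (v + 1)
  end_le : s + imageLength σ u p w R ≤ cut σ u p (v + n)

namespace WindowCopy

variable {p w w' R s s' v v' n : ℕ}

lemma image (hσ : ∀ a, σ a ≠ []) (hfix : IsFixedPoint σ u) (h : WindowCopy σ u p w R s v n)
    (r : ℕ) : WindowCopy σ u (r + p) w R (cut σ u r s) v n where
  agree := by
    rw [cut_comp hfix, imageLength_comp hfix]
    exact h.agree.image hfix r
  start_ge := by
    rw [cut_comp hfix]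
    exact cut_mono σ u r h.start_ge
  start_lt := by
    rw [cut_comp hfix]
    exact cut_strictMono hσ r h.start_lt
  end_le := by
    rw [cut_comp hfix, imageLength_comp hfix, h.agree.imageLength_eq, ← cut_add]
    exact cut_mono σ u r h.end_le

lemma transfer (hfix : IsFixedPoint σ u) (h : WindowCopy σ u p w R s v n) (hn : 0 < n)
    (hw : Agree u w w' R) (hv : Agree u v v' n) : ∃ s', WindowCopy σ u p w' R s' v' n := by
  obtain ⟨hagree, hge, hlt, hle⟩ := h
  obtain ⟨a, rfl⟩ := Nat.exists_eq_add_of_le hge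
  have hlen := hw.imageLength_eq (σ := σ) (p := p)
  have hfirst := (hv.mono (show 1 ≤ n from hn)).imageLength_eq (σ := σ) (p := p)
  have hcover := hv.imageLength_eq (σ := σ) (p := p)
  rw [cut_add] at hlt hle
  refine ⟨cut σ u p v' + a, ?_, Nat.le_add_right _ _, ?_, ?_⟩
  · rw [← hlen]
    exact (hw.image hfix p).symm.trans (hagree.trans ((hv.image hfix p).shift (by omega)))
  · rw [cut_add]
    omega
  · rw [cut_add]
    omega

variable [Fintype A] [Nonempty A]

lemma start_unique {K : ℕ} (hpow : PowerFree u K) (h : WindowCopy σ u p w R s v n)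
    (h' : WindowCopy σ u p w R s' v n) (hlong : (K + 1) * Sp σ p ≤ imageLength σ u p w R) :
    s = s' := by
  by_contra hne
  wlog hlt : s < s' generalizing s s'
  · exact this h' h (Ne.symm hne) (by omega)
  obtain ⟨d, rfl⟩ := Nat.exists_eq_add_of_lt hlt
  rw [Nat.add_assoc] at h'
  have hshort : d + 1 ≤ Sp σ p := by
    have hblock := imageLength_le σ u p v 1
    have hge := h.start_ge
    have hlt' := h'.start_lt
    rw [cut_add] at hlt'
    omega
  have hlen : K * (d + 1) ≤ imageLength σ u p w R - (d + 1) := by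
    have := Nat.mul_le_mul_left (K + 1) hshort
    rw [Nat.succ_mul] at this
    omega
  exact hpow _ _ d.succ_pos ((h.agree.period h'.agree).mono hlen)

lemma exists_cut_eq (hσ : ∀ a, σ a ≠ []) (hfix : IsFixedPoint σ u) {K q : ℕ}
    (hpow : PowerFree u K) (hpq : p ≤ q) (hn : 0 < n) (h : WindowCopy σ u p w R s v n)
    (h' : WindowCopy σ u (1 + q) w' R s' v' n) (hw : Agree u w w' R) (hv : Agree u v v' n)
    (hlong : (K + 1) * Sp σ (1 + q) ≤ imageLength σ u (1 + q) w' R) :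
    ∃ t, cut σ u 1 t = s' ∧ Agree u (cut σ u q w') t (imageLength σ u q w' R) := by
  obtain ⟨r, rfl⟩ := Nat.exists_eq_add_of_le' hpq
  obtain ⟨t, ht⟩ := (h.image hσ hfix r).transfer hfix hn hw hv
  exact ⟨t, start_unique hpow (ht.image hσ hfix 1) h' hlong, ht.agree⟩

end WindowCopy

end Windows

section RecognizabilityIndex

/-- The number `R` of blocks in a window; `C⁴(K+1)+2C²+1` when `B = C²`. -/
def windowBlocks (B K : ℕ) : ℕ := B ^ 2 * (K + 1) + 2 * B + 1

/-- The possible numbers of blocks in a cover of the copy of a window. -/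
def coverCounts (B K : ℕ) : Finset ℕ :=
  Finset.Icc (B * (K + 1) + 2) ((K + 1) * B ^ 3 + 2 * B ^ 2 + B + 2)

/-- The highest level at which windows are considered; `p₀` when `B = C²`. -/
def levelBound (B K : ℕ) : ℕ := K ^ 2 * windowBlocks B K * ∑ n ∈ coverCounts B K, n + 1

/-- `σ` is bilaterally recognizable under the index `L`: whether a position is a natural
`1`-cutting point of `u` is determined by the `L` letters on either side of it. -/
def BilaterallyRecognizable {A : Type*} (σ : A → List A) (u : ℕ → A) (L : ℕ) : Prop :=
  ∀ i j : ℕ, L ≤ i → L ≤ j → seg u (i - L) (i + L) = seg u (j - L) (j + L) →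
    i ∈ cutPoints σ u 1 → j ∈ cutPoints σ u 1

lemma mem_coverCounts {B K n : ℕ} (hlow : windowBlocks B K ≤ n * B)
    (hupp : n ≤ windowBlocks B K * B + 2) : n ∈ coverCounts B K := by
  rw [windowBlocks] at hlow hupp
  refine Finset.mem_Icc.2 ⟨le_of_not_gt fun hn => ?_, hupp.trans_eq (by ring)⟩
  have := Nat.mul_le_mul_right B hn.le
  nlinarith

variable {A : Type*} [Fintype A] [Nonempty A] {σ : A → List A} {u : ℕ → A} {B K : ℕ}

lemma exists_windowCopy (hσ : ∀ a, σ a ≠ []) {p : ℕ} (hbal : Sp σ p ≤ B * Ip σ p) {i j L : ℕ}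
    (hL : windowBlocks B K * Sp σ p ≤ L) (hi : L ≤ i) (hj : L ≤ j)
    (h : Agree u (i - L) (j - L) (L + L)) :
    ∃ w s v n, WindowCopy σ u p w (windowBlocks B K) s v n ∧ n ∈ coverCounts B K ∧
      cut σ u p w ≤ i ∧ i ≤ cut σ u p (w + windowBlocks B K) ∧ s + i = j + cut σ u p w := by
  set R := windowBlocks B K
  have hRpos : 0 < R := Nat.succ_pos _
  obtain ⟨w, hw, hw'⟩ := exists_cut_le_lt (u := u) hσ p i
  have hsmall : imageLength σ u p w R ≤ R * Sp σ p := imageLength_le σ u p w R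
  have hblock : Sp σ p ≤ R * Sp σ p := Nat.le_mul_of_pos_left _ hRpos
  have hfirst := imageLength_le σ u p w 1
  have hstart : i - L ≤ cut σ u p w := by
    rw [cut_add] at hw'
    omega
  obtain ⟨a, ha⟩ := Nat.exists_eq_add_of_le hstart
  have hagree : Agree u (cut σ u p w) (j - L + a) (imageLength σ u p w R) :=
    ha ▸ h.shift (by omega)
  obtain ⟨v, n, hv, hv', hend, hupp, hlow⟩ := exists_cover (u := u) hσ p (j - L + a)
    (hRpos.trans_le (le_imageLength hσ : R ≤ imageLength σ u p w R))
  have hIp := Ip_pos hσ p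
  have hn : n ∈ coverCounts B K := by
    apply mem_coverCounts
    · refine Nat.le_of_mul_le_mul_right ?_ hIp
      calc R * Ip σ p ≤ imageLength σ u p w R := mul_Ip_le_imageLength σ u p w R
        _ ≤ n * (B * Ip σ p) := hupp.trans (Nat.mul_le_mul_left n hbal)
        _ = n * B * Ip σ p := (Nat.mul_assoc _ _ _).symm
    · refine Nat.le_of_mul_le_mul_right ?_ hIp
      calc n * Ip σ p ≤ R * (B * Ip σ p) + 2 * Ip σ p :=
            hlow.trans (Nat.add_le_add_right (hsmall.trans (Nat.mul_le_mul_left R hbal)) _)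
        _ = (R * B + 2) * Ip σ p := by ring
  exact ⟨w, j - L + a, v, n, ⟨hagree, hv, hv', hend⟩, hn, hw,
    hw'.le.trans (cut_mono σ u p (by omega)), by omega⟩

lemma mul_Sp_le_imageLength (hbal : ∀ p, Sp σ p ≤ B * Ip σ p) (p w : ℕ) :
    (K + 1) * Sp σ p ≤ imageLength σ u p w (windowBlocks B K) := by
  have hblocks : (K + 1) * B ≤ windowBlocks B K := by
    have := Nat.mul_le_mul_right (K + 1) (Nat.le_self_pow two_ne_zero B)
    rw [windowBlocks]
    linarith
  calc (K + 1) * Sp σ p ≤ (K + 1) * (B * Ip σ p) := Nat.mul_le_mul_left _ (hbal p)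
    _ = (K + 1) * B * Ip σ p := (Nat.mul_assoc _ _ _).symm
    _ ≤ windowBlocks B K * Ip σ p := Nat.mul_le_mul_right _ hblocks
    _ ≤ imageLength σ u p w (windowBlocks B K) := mul_Ip_le_imageLength σ u p w _

theorem bilaterallyRecognizable (hσ : ∀ a, σ a ≠ []) (hfix : IsFixedPoint σ u)
    (hbal : ∀ p, Sp σ p ≤ B * Ip σ p) (hpow : PowerFree u K) (hcomp : LinearComplexity u K) :
    BilaterallyRecognizable σ u (windowBlocks B K * Sp σ (levelBound B K)) := by
  intro i j hi hj hij hcut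
  set R := windowBlocks B K with hR_def
  set L := R * Sp σ (levelBound B K)
  have hR : 0 < R := Nat.succ_pos _
  have hagree : Agree u (i - L) (j - L) (L + L) :=
    seg_eq_seg_iff.1 (by convert hij using 2 <;> omega)
  have hcopy (p : ℕ) (hp : p ≤ levelBound B K) :=
    exists_windowCopy hσ (hbal p) (Nat.mul_le_mul_left R (monotone_Sp hσ hp)) hi hj hagree
  choose! w s v n hcopy hn hwi hiw hs using hcopy
  have hn_pos : ∀ n ∈ coverCounts B K, 0 < n := fun n hn => by
    have := (Finset.mem_Icc.1 hn).1
    omega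
  obtain ⟨p, q, hpq, hq, hnpq, hw, hv⟩ :=
    hcomp.exists_lt_agree hR hn_pos hn (by rw [levelBound, ← hR_def]; omega)
  obtain ⟨q, rfl⟩ := Nat.exists_eq_add_of_le (Nat.one_le_of_lt hpq)
  have hp : p ≤ levelBound B K := hpq.le.trans hq
  obtain ⟨t, ht, hlift⟩ := WindowCopy.exists_cut_eq hσ hfix hpow (by omega : p ≤ q)
    (hn_pos _ (hn p hp)) (hcopy p hp) (hnpq ▸ hcopy (1 + q) hq) hw hv
    (mul_Sp_le_imageLength hbal _ _)
  refine hlift.mem_cutPoints hσ hcut ?_ ?_ ?_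
  · rw [← cut_comp hfix]
    exact hwi _ hq
  · rw [← cut_add, ← cut_comp hfix]
    exact hiw _ hq
  · rw [← cut_comp hfix, ht]
    exact hs _ hq

variable {lam : ℝ} {β : A → ℝ}

lemma L0_eq : L0 σ u lam β = windowBlocks (Cst β ^ 2) (Kst u lam β) *
    Sp σ (levelBound (Cst β ^ 2) (Kst u lam β)) := by
  simp only [L0, p0, levelBound, windowBlocks, coverCounts, ← pow_mul, Nat.reduceMul]

end RecognizabilityIndex

end Recognizability

/-- Lemma 4.2, first part: `σ` is bilaterally recognizable under the index
`L₀ = (C⁴(K+1)+2C²+1) S_{p₀}`. -/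
theorem stmt_8 (A : Type*) [Fintype A] [DecidableEq A] [Nonempty A]
    (h2 : 2 ≤ Fintype.card A)
    (σ : A → List A) (hσne : ∀ a, σ a ≠ [])
    (hprim : IsPrimitiveSubst σ)
    (u : ℕ → A) (hfix : IsFixedPoint σ u) (hap : AperiodicSeq u)
    (lam : ℝ) (β : A → ℝ) (hβ : ∀ a, 0 < β a)
    (heig : (incMatrixR σ).mulVec β = lam • β) :
    ∀ i j : ℕ, L0 σ u lam β ≤ i → L0 σ u lam β ≤ j →
      seg u (i - L0 σ u lam β) (i + L0 σ u lam β) =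
        seg u (j - L0 σ u lam β) (j + L0 σ u lam β) →
      i ∈ cutPoints σ u 1 → j ∈ cutPoints σ u 1 := by
  have : Nontrivial A := Fintype.one_lt_card_iff_nontrivial.1 h2
  rw [Recognizability.L0_eq]
  exact Recognizability.bilaterallyRecognizable hσne hfix
    (Recognizability.Sp_le_mul_Ip hβ heig)
    (Recognizability.powerFree_Kst hσne hprim hfix hap hβ heig)
    (Recognizability.linearComplexity_Kst hσne hprim hfix hβ heig)
end
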